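/- arXiv:1412.0844 — 4 statements merged into one kernel-verified Lean document; each statement's English description precedes it below -/
import Mathlib

section
/- There exist constants a_- > 0, a_+ > 0 and b_-, b_+, c'_-, c'_+ ∈ ℝ such that, as x → −∞: a(x) = a_-·e^{κ_- x} + O(e^{3κ_- x}), a'(x) = a_-·κ_-·e^{κ_- x} + O(e^{3κ_- x}), b(x) = b_-·e^{κ_- x} + O(e^{3κ_- x}), b'(x) = b_-·κ_-·e^{κ_- x} + O(e^{3κ_- x}), c(x) = c_- + c'_-·e^{2κ_- x} + O(e^{4κ_- x}), c'(x) = 2c'_-·κ_-·e^{2κ_- x} + O(e^{4κ_- x}); and, as x → +∞: a(x) = a_+·e^{κ_+ x} + O(e^{3κ_+ x}), a'(x) = a_+·κ_+·e^{κ_+ x} + O(e^{3κ_+ x}), b(x) = b_+·e^{κ_+ x} + O(e^{3κ_+ x}), b'(x) = b_+·κ_+·e^{κ_+ x} + O(e^{3κ_+ x}), c(x) = c_+ + c'_+·e^{2κ_+ x} + O(e^{4κ_+ x}), c'(x) = 2c'_+·κ_+·e^{2κ_+ x} + O(e^{4κ_+ x}). Here primes denote d/dx and c_± = qQ/r_±.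 -/
open Asymptotics Filter

/-!
Near a horizon `r₀` with surface gravity `κ`, the function `t = e^{2κx}` of the radius is
`|r - r₀|` times a positive analytic function, hence an analytic coordinate vanishing at `r₀`, and
by the inverse function theorem `r = k(t)` with `k` analytic at `0`. So `c` is an analytic function
of `t = e^{2κx}`, while `F` has a simple zero, so `F = t Ψ(t)` and `√F = e^{κx} √Ψ(t)` with `√Ψ`
analytic at `0`; each potential thus has the form `const + e^{αx} A(e^{2κx})` with `A` analytic at
`0`. The derivative of `e^{αx} A(e^{2κx})` is of the same form with `A` replaced by
`αA + 2κtA'`, so one estimate settles both the functions and their derivatives.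
-/

open Real Set Topology

/-- The end of the real line at which `e^{μs} → 0`: this is `-∞` for `μ > 0` and `+∞` for `μ < 0`,
so that the two horizons can be treated by the same argument. It is the trivial filter `⊥` for
`μ = 0`. -/
noncomputable def expDecayEnd (μ : ℝ) : Filter ℝ :=
  comap (fun s => exp (μ * s)) (𝓝 0)

lemma tendsto_exp_expDecayEnd (μ : ℝ) :
    Tendsto (fun s => exp (μ * s)) (expDecayEnd μ) (𝓝 0) :=
  tendsto_comap

lemma expDecayEnd_of_pos {μ : ℝ} (hμ : 0 < μ) : expDecayEnd μ = atBot := by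
  have h : comap (μ * ·) atBot = atBot := (OrderIso.mulLeft₀ μ hμ).comap_atBot
  rw [expDecayEnd, ← h, ← comap_exp_nhds_zero, comap_comap, Function.comp_def]

lemma expDecayEnd_of_neg {μ : ℝ} (hμ : μ < 0) : expDecayEnd μ = atTop := by
  have h : expDecayEnd μ = comap Neg.neg (expDecayEnd (-μ)) := by
    simp only [expDecayEnd, comap_comap, Function.comp_def, neg_mul_neg]
  rw [h, expDecayEnd_of_pos (neg_pos.2 hμ), comap_neg_atBot]

lemma eventually_eventually_nhds_expDecayEnd {μ : ℝ} {p : ℝ → Prop}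
    (hp : ∀ᶠ s in expDecayEnd μ, p s) : ∀ᶠ s in expDecayEnd μ, ∀ᶠ s' in 𝓝 s, p s' := by
  have hcont : Continuous fun s => exp (μ * s) := by fun_prop
  rw [expDecayEnd, eventually_comap] at hp ⊢
  filter_upwards [eventually_eventually_nhds.2 hp] with t ht s hs
  subst hs
  filter_upwards [hcont.continuousAt.eventually ht] with s' hs' using hs' s' rfl

lemma tendsto_expDecayEnd_of_mul_abs_sub_le {μ δ r₀ : ℝ} {r : ℝ → ℝ} (hδ : 0 < δ)
    (hr : ∀ s, δ * |r s - r₀| ≤ exp (μ * s)) : Tendsto r (expDecayEnd μ) (𝓝 r₀) := by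
  rw [tendsto_iff_norm_sub_tendsto_zero]
  refine squeeze_zero (fun s => norm_nonneg _) (fun s => (le_div_iff₀' hδ).2 (hr s)) ?_
  simpa using (tendsto_exp_expDecayEnd μ).div_const δ

/-- The expansion `f(s) = C e^{αs} + O(e^{βs})` along `l`, together with its termwise derivative
`f'(s) = C α e^{αs} + O(e^{βs})`. -/
structure HasExpExpansion (l : Filter ℝ) (f : ℝ → ℝ) (C α β : ℝ) : Prop where
  isBigO : (fun s => f s - C * exp (α * s)) =O[l] fun s => exp (β * s)
  isBigO_deriv : (fun s => deriv f s - C * α * exp (α * s)) =O[l] fun s => exp (β * s)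

section ExpExpansion

variable {l : Filter ℝ} {A f : ℝ → ℝ} {α μ : ℝ}

lemma isBigO_exp_mul_comp_exp_sub (hl : Tendsto (fun s => exp (μ * s)) l (𝓝 0))
    (hA : DifferentiableAt ℝ A 0) :
    (fun s => exp (α * s) * A (exp (μ * s)) - A 0 * exp (α * s))
      =O[l] fun s => exp ((α + μ) * s) := by
  have hAt : (fun s => A (exp (μ * s)) - A 0) =O[l] fun s => exp (μ * s) := by
    simpa [Function.comp_def] using hA.isBigO_sub.comp_tendsto hl
  refine ((isBigO_refl (fun s => exp (α * s)) l).mul hAt).congr (fun s => ?_) (fun s => ?_)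
  · ring
  · rw [← exp_add, add_mul]

lemma hasDerivAt_exp_mul_comp_exp {s : ℝ} (hA : DifferentiableAt ℝ A (exp (μ * s))) :
    HasDerivAt (fun s => exp (α * s) * A (exp (μ * s)))
      (exp (α * s) * (α * A (exp (μ * s)) + μ * (exp (μ * s) * deriv A (exp (μ * s))))) s := by
  have hexp (ν : ℝ) : HasDerivAt (fun s => exp (ν * s)) (exp (ν * s) * ν) s := by
    simpa using ((hasDerivAt_id s).const_mul ν).exp
  convert! (hexp α).mul (hA.hasDerivAt.comp s (hexp μ)) using 1
  simp only [Function.comp_apply]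
  ring

lemma HasExpExpansion.of_eventually_eq (hl : Tendsto (fun s => exp (μ * s)) l (𝓝 0))
    (hA : AnalyticAt ℝ A 0)
    (hf : ∀ᶠ s in l, f =ᶠ[𝓝 s] fun s => exp (α * s) * A (exp (μ * s))) :
    HasExpExpansion l f (A 0) α (α + μ) where
  isBigO := (isBigO_exp_mul_comp_exp_sub hl hA.differentiableAt).congr'
    (hf.mono fun s hs => congrArg (· - A 0 * exp (α * s)) hs.eq_of_nhds.symm) .rfl
  isBigO_deriv := by
    have hB : DifferentiableAt ℝ (fun t => α * A t + μ * (t * deriv A t)) 0 := by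
      have := hA.differentiableAt
      have := hA.deriv.differentiableAt
      fun_prop
    refine (isBigO_exp_mul_comp_exp_sub hl hB).congr' ?_ .rfl
    filter_upwards [hf, hl.eventually hA.eventually_analyticAt] with s hs hAs
    rw [hs.deriv_eq, (hasDerivAt_exp_mul_comp_exp hAs.differentiableAt).deriv]
    ring

lemma HasExpExpansion.isBigO_of_sub_const {c₀ C κ β : ℝ}
    (hf : HasExpExpansion l (fun s => f s - c₀) C (2 * κ) β) :
    ((fun s => f s - (c₀ + C * exp (2 * κ * s))) =O[l] fun s => exp (β * s)) ∧
      (fun s => deriv f s - 2 * C * κ * exp (2 * κ * s)) =O[l] fun s => exp (β * s) := by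
  refine ⟨by simpa only [sub_sub] using hf.isBigO, ?_⟩
  simpa only [deriv_sub_const_fun, mul_left_comm C, mul_assoc] using hf.isBigO_deriv

end ExpExpansion

section Horizon

lemma analyticAt_dslope {f : ℝ → ℝ} {t : ℝ} (hf : AnalyticAt ℝ f t) :
    AnalyticAt ℝ (dslope f t) t :=
  let ⟨_, hp⟩ := hf
  hp.has_fpower_series_dslope_fslope.analyticAt

variable {κ r₀ : ℝ} {h r F g : ℝ → ℝ}

lemma exists_analyticAt_eventually_eq_comp_exp (hh : AnalyticAt ℝ h r₀) (hh₀ : h r₀ = 0)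
    (hh' : deriv h r₀ ≠ 0) (hr : Tendsto r (expDecayEnd (2 * κ)) (𝓝 r₀))
    (hhr : ∀ s, h (r s) = exp (2 * κ * s)) :
    ∃ k : ℝ → ℝ, AnalyticAt ℝ k 0 ∧ k 0 = r₀ ∧ deriv k 0 = (deriv h r₀)⁻¹ ∧
      ∀ᶠ s in expDecayEnd (2 * κ), r =ᶠ[𝓝 s] fun s => k (exp (2 * κ * s)) := by
  set k := hh.hasStrictDerivAt.localInverse _ _ _ hh'
  have hkh : ∀ᶠ ρ in 𝓝 r₀, k (h ρ) = ρ := hh.hasStrictDerivAt.eventually_left_inverse hh'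
  refine ⟨k, ?_, ?_, ?_, eventually_eventually_nhds_expDecayEnd ?_⟩
  · simpa only [hh₀] using hh.analyticAt_localInverse hh'
  · simpa only [hh₀] using hkh.self_of_nhds
  · simpa only [hh₀] using (hh.hasStrictDerivAt.to_localInverse hh').hasDerivAt.deriv
  · filter_upwards [hr.eventually hkh] with s hs
    rw [← hhr, hs]

lemma hasExpExpansion_comp_sub (hh : AnalyticAt ℝ h r₀) (hh₀ : h r₀ = 0)
    (hh' : deriv h r₀ ≠ 0) (hr : Tendsto r (expDecayEnd (2 * κ)) (𝓝 r₀))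
    (hhr : ∀ s, h (r s) = exp (2 * κ * s)) (hg : AnalyticAt ℝ g r₀) :
    HasExpExpansion (expDecayEnd (2 * κ)) (fun s => g (r s) - g r₀)
      (deriv g r₀ / deriv h r₀) (2 * κ) (4 * κ) := by
  obtain ⟨k, hk, rfl, hk', hrk⟩ := exists_analyticAt_eventually_eq_comp_exp hh hh₀ hh' hr hhr
  have hgk : AnalyticAt ℝ (g ∘ k) 0 := hg.comp hk
  convert HasExpExpansion.of_eventually_eq (tendsto_exp_expDecayEnd (2 * κ)) (analyticAt_dslope hgk)
    (hrk.mono fun s hs => ?_) using 1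
  · rw [dslope_same, deriv_comp _ hg.differentiableAt hk.differentiableAt, hk', div_eq_mul_inv]
  · ring
  · filter_upwards [hs] with s' hs'
    simpa [hs'] using (sub_smul_dslope (g ∘ k) 0 (exp (2 * κ * s'))).symm

lemma hasExpExpansion_comp_mul_sqrt (hh : AnalyticAt ℝ h r₀) (hh₀ : h r₀ = 0)
    (hr : Tendsto r (expDecayEnd (2 * κ)) (𝓝 r₀)) (hhr : ∀ s, h (r s) = exp (2 * κ * s))
    (hF : AnalyticAt ℝ F r₀) (hF₀ : F r₀ = 0) (hFh : 0 < deriv F r₀ / deriv h r₀)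
    (hg : AnalyticAt ℝ g r₀) :
    HasExpExpansion (expDecayEnd (2 * κ)) (fun s => g (r s) * √(F (r s)))
      (g r₀ * √(deriv F r₀ / deriv h r₀)) κ (3 * κ) := by
  have hh' : deriv h r₀ ≠ 0 := (div_ne_zero_iff.1 hFh.ne').2
  obtain ⟨k, hk, rfl, hk', hrk⟩ := exists_analyticAt_eventually_eq_comp_exp hh hh₀ hh' hr hhr
  set Ψ := dslope (F ∘ k) 0 with hΨdef
  have hΨ : AnalyticAt ℝ Ψ 0 := analyticAt_dslope (hF.comp hk)
  have hΨ₀ : Ψ 0 = deriv F (k 0) / deriv h (k 0) := by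
    rw [hΨdef, dslope_same, deriv_comp _ hF.differentiableAt hk.differentiableAt, hk',
      div_eq_mul_inv]
  have hFk (t : ℝ) : F (k t) = t * Ψ t := by
    simpa [hF₀] using (sub_smul_dslope (F ∘ k) 0 t).symm
  have hA : AnalyticAt ℝ (fun t => g (k t) * √(Ψ t)) 0 :=
    (hg.comp hk).mul (hΨ.contDiffAt.sqrt (hΨ₀ ▸ hFh.ne')).analyticAt
  convert HasExpExpansion.of_eventually_eq (tendsto_exp_expDecayEnd (2 * κ)) hA
    (hrk.mono fun s hs => ?_) using 1
  · rw [hΨ₀]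
  · ring
  · filter_upwards [hs] with s' hs'
    have hexp : exp (2 * κ * s') = exp (κ * s') ^ 2 := by rw [← exp_nat_mul]; push_cast; ring_nf
    rw [hs', hFk, sqrt_mul (exp_pos _).le, hexp, sqrt_sq (exp_pos _).le]
    ring

end Horizon

/-- The exponential `e^{2κx}` of the Regge–Wheeler coordinate
`x = u + (2κ)⁻¹ log (σ(r - r₀)) + (2κ')⁻¹ log (σ(r₁ - r))` between the horizons `r₀` and `r₁`, with
the first logarithm cancelled, so that it extends analytically across `r₀`. The constant `σ` has
the sign of `r₁ - r₀`. -/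
noncomputable def horizonCoord (u : ℝ → ℝ) (κ κ' σ r₀ r₁ r : ℝ) : ℝ :=
  σ * (r - r₀) * exp (2 * κ * (u r + 1 / (2 * κ') * log (σ * (r₁ - r))))

namespace horizonCoord

variable {u : ℝ → ℝ} {κ κ' σ r₀ r₁ : ℝ}

lemma apply_horizon : horizonCoord u κ κ' σ r₀ r₁ r₀ = 0 := by
  simp [horizonCoord]

lemma eq_exp {r : ℝ} (hκ : κ ≠ 0) (hr : 0 < σ * (r - r₀)) :
    horizonCoord u κ κ' σ r₀ r₁ r = exp (2 * κ *
      (u r + 1 / (2 * κ) * log (σ * (r - r₀)) + 1 / (2 * κ') * log (σ * (r₁ - r)))) := by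
  have hcancel : 2 * κ * (1 / (2 * κ)) = 1 := by field_simp
  rw [horizonCoord]
  nth_rw 1 [← exp_log hr]
  rw [← exp_add]
  congr 1
  linear_combination -log (σ * (r - r₀)) * hcancel

lemma analyticAt_exp_factor (hu : AnalyticAt ℝ u r₀) (hσ : 0 < σ * (r₁ - r₀)) :
    AnalyticAt ℝ (fun r => exp (2 * κ * (u r + 1 / (2 * κ') * log (σ * (r₁ - r))))) r₀ :=
  (analyticAt_const.mul (hu.add (analyticAt_const.mul (AnalyticAt.log (by fun_prop) hσ)))).rexp

lemma analyticAt (hu : AnalyticAt ℝ u r₀) (hσ : 0 < σ * (r₁ - r₀)) :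
    AnalyticAt ℝ (horizonCoord u κ κ' σ r₀ r₁) r₀ :=
  AnalyticAt.mul (by fun_prop) (analyticAt_exp_factor hu hσ)

lemma deriv_horizon (hu : AnalyticAt ℝ u r₀) (hσ : 0 < σ * (r₁ - r₀)) :
    deriv (horizonCoord u κ κ' σ r₀ r₁) r₀ =
      σ * exp (2 * κ * (u r₀ + 1 / (2 * κ') * log (σ * (r₁ - r₀)))) := by
  have hlin : HasDerivAt (fun r => σ * (r - r₀)) σ r₀ := by
    simpa using ((hasDerivAt_id r₀).sub_const r₀).const_mul σ
  have hexp := (analyticAt_exp_factor (κ := κ) (κ' := κ') hu hσ).differentiableAt.hasDerivAt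
  refine (hlin.fun_mul hexp).deriv.trans ?_
  simp only [sub_self, mul_zero, zero_mul, add_zero]

-- As `κ / κ' < 0`, the factor `|r₁ - r| ^ (κ / κ')` blows up, rather than vanishes, at `r₁`.
lemma exists_mul_abs_sub_le {K : Set ℝ} (hK : IsCompact K) (hu : ContinuousOn u K)
    (hσ : σ ≠ 0) (hκ : κ * κ' < 0) :
    ∃ δ > 0, ∀ r ∈ K, 0 < σ * (r - r₀) → 0 < σ * (r₁ - r) →
      δ * |r - r₀| ≤ horizonCoord u κ κ' σ r₀ r₁ r := by
  obtain ⟨B, hB⟩ := hK.bddBelow_image (hu.const_smul (2 * κ))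
  refine ⟨|σ| * exp (B + κ / κ' * log (σ * (r₁ - r₀))), by positivity,
    fun r hrK hr₀ hr₁ => ?_⟩
  have hu_le : B ≤ 2 * κ * u r := hB ⟨r, hrK, rfl⟩
  have hlog_le : log (σ * (r₁ - r)) ≤ log (σ * (r₁ - r₀)) := log_le_log hr₁ (by linarith)
  have hκ_div : κ / κ' ≤ 0 := (div_neg_iff.2 (mul_neg_iff.1 hκ)).le
  calc |σ| * exp (B + κ / κ' * log (σ * (r₁ - r₀))) * |r - r₀|
      = σ * (r - r₀) * exp (B + κ / κ' * log (σ * (r₁ - r₀))) := by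
        rw [mul_right_comm, ← abs_mul, abs_of_pos hr₀]
    _ ≤ σ * (r - r₀) * exp (2 * κ * u r + κ / κ' * log (σ * (r₁ - r))) := by
        gcongr _ * exp (?_ + ?_)
        exact mul_le_mul_of_nonpos_left hlog_le hκ_div
    _ = horizonCoord u κ κ' σ r₀ r₁ r := by
        rw [horizonCoord]
        congr 2
        ring

end horizonCoord

theorem exists_hasExpExpansion_at_horizon {F u r : ℝ → ℝ} {κ κ' σ r₀ r₁ : ℝ} {K : Set ℝ}
    (hF : AnalyticAt ℝ F r₀) (hF₀ : F r₀ = 0) (hκ : κ = deriv F r₀ / 2)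
    (hσκ : 0 < σ * κ) (hκκ' : κ * κ' < 0)
    (hK : IsCompact K) (hu : AnalyticOnNhd ℝ u K) (hr₀ : r₀ ∈ K) (hrK : ∀ s, r s ∈ K)
    (hr₀r : ∀ s, 0 < σ * (r s - r₀)) (hrr₁ : ∀ s, 0 < σ * (r₁ - r s))
    (hr : ∀ s, u (r s) + 1 / (2 * κ) * log (σ * (r s - r₀))
      + 1 / (2 * κ') * log (σ * (r₁ - r s)) = s) :
    ∃ C > 0, ∃ D, ∀ g : ℝ → ℝ, AnalyticAt ℝ g r₀ →
      HasExpExpansion (expDecayEnd (2 * κ)) (fun s => g (r s) * √(F (r s)))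
        (g r₀ * C) κ (3 * κ) ∧
      HasExpExpansion (expDecayEnd (2 * κ)) (fun s => g (r s) - g r₀)
        (deriv g r₀ * D) (2 * κ) (4 * κ) := by
  have hσr : 0 < σ * (r₁ - r₀) := by linarith [hr₀r 0, hrr₁ 0]
  have hκ₀ : κ ≠ 0 := right_ne_zero_of_mul hσκ.ne'
  have hσ₀ : σ ≠ 0 := left_ne_zero_of_mul hσκ.ne'
  set h := horizonCoord u κ κ' σ r₀ r₁
  have hh : AnalyticAt ℝ h r₀ := horizonCoord.analyticAt (hu r₀ hr₀) hσr
  have hh₀ : h r₀ = 0 := horizonCoord.apply_horizon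
  have hh' : deriv h r₀ = σ * _ := horizonCoord.deriv_horizon (hu r₀ hr₀) hσr
  have hhr (s : ℝ) : h (r s) = exp (2 * κ * s) :=
    (horizonCoord.eq_exp hκ₀ (hr₀r s)).trans (by rw [hr])
  obtain ⟨δ, hδ, hδh⟩ := horizonCoord.exists_mul_abs_sub_le hK hu.continuousOn hσ₀ hκκ'
  have hlim : Tendsto r (expDecayEnd (2 * κ)) (𝓝 r₀) :=
    tendsto_expDecayEnd_of_mul_abs_sub_le hδ fun s =>
      (hδh (r s) (hrK s) (hr₀r s) (hrr₁ s)).trans_eq (hhr s)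
  have hFh : 0 < deriv F r₀ / deriv h r₀ := by
    have hκσ : 0 < κ / σ := div_pos_iff.2 (mul_pos_iff.1 (mul_comm σ κ ▸ hσκ))
    rw [hh', show deriv F r₀ = 2 * κ by linarith, ← div_div, mul_div_assoc]
    positivity
  have hh'₀ : deriv h r₀ ≠ 0 := (div_ne_zero_iff.1 hFh.ne').2
  exact ⟨√(deriv F r₀ / deriv h r₀), sqrt_pos.2 hFh, (deriv h r₀)⁻¹, fun g hg =>
    ⟨hasExpExpansion_comp_mul_sqrt hh hh₀ hlim hhr hF hF₀ hFh hg,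
      hasExpExpansion_comp_sub hh hh₀ hh'₀ hlim hhr hg⟩⟩

theorem stmt_1_general {F u x rfun : ℝ → ℝ} {rm rp κm κp : ℝ} (hrm : 0 < rm) (hrmp : rm < rp)
    (hFm_analytic : AnalyticAt ℝ F rm) (hFp_analytic : AnalyticAt ℝ F rp)
    (hFm : F rm = 0) (hFp : F rp = 0)
    (hκm : κm = deriv F rm / 2) (hκp : κp = deriv F rp / 2)
    (hκmpos : 0 < κm) (hκpneg : κp < 0) (hu : AnalyticOnNhd ℝ u (Icc rm rp))
    (hx : ∀ r ∈ Ioo rm rp,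
      x r = u r + 1 / (2 * κm) * log (r - rm) + 1 / (2 * κp) * log (rp - r))
    (hrmem : ∀ s, rfun s ∈ Ioo rm rp) (hrinv : ∀ s, x (rfun s) = s)
    {m e : ℝ} {a b c : ℝ → ℝ} (ha : ∀ s, a s = √(F (rfun s)) / rfun s)
    (hb : ∀ s, b s = m * √(F (rfun s))) (hc : ∀ s, c s = e / rfun s) :
    ∃ am > (0 : ℝ), ∃ ap > (0 : ℝ), ∃ bm bp c'm c'p : ℝ,
      ((fun s => a s - am * exp (κm * s)) =O[atBot] fun s => exp (3 * κm * s)) ∧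
      ((fun s => deriv a s - am * κm * exp (κm * s))
        =O[atBot] fun s => exp (3 * κm * s)) ∧
      ((fun s => b s - bm * exp (κm * s)) =O[atBot] fun s => exp (3 * κm * s)) ∧
      ((fun s => deriv b s - bm * κm * exp (κm * s))
        =O[atBot] fun s => exp (3 * κm * s)) ∧
      ((fun s => c s - (e / rm + c'm * exp (2 * κm * s)))
        =O[atBot] fun s => exp (4 * κm * s)) ∧
      ((fun s => deriv c s - 2 * c'm * κm * exp (2 * κm * s))
        =O[atBot] fun s => exp (4 * κm * s)) ∧
      ((fun s => a s - ap * exp (κp * s)) =O[atTop] fun s => exp (3 * κp * s)) ∧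
      ((fun s => deriv a s - ap * κp * exp (κp * s))
        =O[atTop] fun s => exp (3 * κp * s)) ∧
      ((fun s => b s - bp * exp (κp * s)) =O[atTop] fun s => exp (3 * κp * s)) ∧
      ((fun s => deriv b s - bp * κp * exp (κp * s))
        =O[atTop] fun s => exp (3 * κp * s)) ∧
      ((fun s => c s - (e / rp + c'p * exp (2 * κp * s)))
        =O[atTop] fun s => exp (4 * κp * s)) ∧
      ((fun s => deriv c s - 2 * c'p * κp * exp (2 * κp * s))
        =O[atTop] fun s => exp (4 * κp * s)) := by
  have hrK (s : ℝ) : rfun s ∈ Icc rm rp := Ioo_subset_Icc_self (hrmem s)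
  have hr (s : ℝ) : u (rfun s) + 1 / (2 * κm) * log (rfun s - rm)
      + 1 / (2 * κp) * log (rp - rfun s) = s :=
    (hx _ (hrmem s)).symm.trans (hrinv s)
  obtain ⟨Cm, hCm, Dm, hm⟩ := exists_hasExpExpansion_at_horizon (σ := 1) (κ' := κp) (r₁ := rp)
    hFm_analytic hFm hκm (by linarith) (mul_neg_of_pos_of_neg hκmpos hκpneg) isCompact_Icc hu
    (left_mem_Icc.2 hrmp.le) hrK (fun s => by linarith [(hrmem s).1])
    (fun s => by linarith [(hrmem s).2]) (by simpa only [one_mul] using hr)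
  obtain ⟨Cp, hCp, Dp, hp⟩ := exists_hasExpExpansion_at_horizon (σ := -1) (κ' := κm) (r₁ := rm)
    hFp_analytic hFp hκp (by linarith) (mul_neg_of_neg_of_pos hκpneg hκmpos) isCompact_Icc hu
    (right_mem_Icc.2 hrmp.le) hrK (fun s => by linarith [(hrmem s).2])
    (fun s => by linarith [(hrmem s).1])
    (by simpa only [neg_one_mul, neg_sub, add_right_comm] using hr)
  rw [expDecayEnd_of_pos (by linarith)] at hm
  rw [expDecayEnd_of_neg (by linarith)] at hp
  obtain rfl : a = fun s => (rfun s)⁻¹ * √(F (rfun s)) :=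
    funext fun s => (ha s).trans (div_eq_inv_mul _ _)
  obtain rfl : b = fun s => m * √(F (rfun s)) := funext hb
  obtain rfl : c = fun s => e / rfun s := funext hc
  have hrp : 0 < rp := hrm.trans hrmp
  have ham := (hm (·⁻¹) (analyticAt_inv hrm.ne')).1
  have hap := (hp (·⁻¹) (analyticAt_inv hrp.ne')).1
  have hbm := (hm (fun _ => m) analyticAt_const).1
  have hbp := (hp (fun _ => m) analyticAt_const).1
  have hcm := (hm (e / ·) (analyticAt_const.div analyticAt_id hrm.ne')).2.isBigO_of_sub_const
  have hcp := (hp (e / ·) (analyticAt_const.div analyticAt_id hrp.ne')).2.isBigO_of_sub_const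
  exact ⟨_, by positivity, _, by positivity, _, _, _, _,
    ham.isBigO, ham.isBigO_deriv, hbm.isBigO, hbm.isBigO_deriv, hcm.1, hcm.2,
    hap.isBigO, hap.isBigO_deriv, hbp.isBigO, hbp.isBigO_deriv, hcp.1, hcp.2⟩

lemma analyticAt_reissnerNordstromDeSitter (M Q Λ : ℝ) {r : ℝ} (hr : r ≠ 0) :
    AnalyticAt ℝ (fun r => 1 - 2 * M / r + Q ^ 2 / r ^ 2 - Λ * r ^ 2 / 3) r := by
  fun_prop (disch := positivity)

lemma analyticOnNhd_const_mul_log_sub (k c : ℝ) :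
    AnalyticOnNhd ℝ (fun r => k * log (r - c)) (Ioi c) := fun r hr =>
  analyticAt_const.mul (AnalyticAt.log (by fun_prop) (sub_pos.2 hr))

/-- Asymptotics of the potentials `a`, `b`, `c` (and their derivatives)
of the Dirac equation in a dS-RN black hole, at both horizons `x → ±∞`:
there are constants `a₋, a₊ > 0` and `b₋, b₊, c'₋, c'₊ ∈ ℝ` such that, e.g. as `x → −∞`,
`a(x) = a₋ e^{κ₋x} + O(e^{3κ₋x})`, ..., `c(x) = c₋ + c'₋ e^{2κ₋x} + O(e^{4κ₋x})`, and
similarly as `x → +∞` with `κ₊`. -/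
theorem stmt_1 (M Q Λ : ℝ) (hM : 0 < M) (hΛ : 0 < Λ)
    (rn rc rm rp : ℝ) (hrn : rn < 0) (hrc : 0 < rc) (hrcm : rc < rm) (hrmp : rm < rp)
    (F : ℝ → ℝ)
    (hF : ∀ r, F r = 1 - 2 * M / r + Q ^ 2 / r ^ 2 - Λ * r ^ 2 / 3)
    (hFn : F rn = 0) (hFc : F rc = 0) (hFm : F rm = 0) (hFp : F rp = 0)
    (hFpos : ∀ r ∈ Set.Ioo rm rp, 0 < F r)
    (κn κc κm κp : ℝ)
    (hκn : κn = deriv F rn / 2) (hκc : κc = deriv F rc / 2)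
    (hκm : κm = deriv F rm / 2) (hκp : κp = deriv F rp / 2)
    (hκmpos : 0 < κm) (hκpneg : κp < 0)
    (x : ℝ → ℝ)
    (hx : ∀ r, x r = 1 / (2 * κn) * Real.log (r - rn) + 1 / (2 * κc) * Real.log (r - rc)
      + 1 / (2 * κm) * Real.log (r - rm) + 1 / (2 * κp) * Real.log (rp - r))
    (rfun : ℝ → ℝ)
    (hrmem : ∀ s, rfun s ∈ Set.Ioo rm rp) (hrinv : ∀ s, x (rfun s) = s)
    (m q : ℝ) (a b c : ℝ → ℝ)
    (ha : ∀ s, a s = Real.sqrt (F (rfun s)) / rfun s)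
    (hb : ∀ s, b s = m * Real.sqrt (F (rfun s)))
    (hc : ∀ s, c s = q * Q / rfun s)
    (cm cp : ℝ) (hcm : cm = q * Q / rm) (hcp : cp = q * Q / rp) :
    ∃ am > (0 : ℝ), ∃ ap > (0 : ℝ), ∃ bm bp c'm c'p : ℝ,
      ((fun s => a s - am * Real.exp (κm * s)) =O[atBot] fun s => Real.exp (3 * κm * s)) ∧
      ((fun s => deriv a s - am * κm * Real.exp (κm * s))
        =O[atBot] fun s => Real.exp (3 * κm * s)) ∧
      ((fun s => b s - bm * Real.exp (κm * s)) =O[atBot] fun s => Real.exp (3 * κm * s)) ∧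
      ((fun s => deriv b s - bm * κm * Real.exp (κm * s))
        =O[atBot] fun s => Real.exp (3 * κm * s)) ∧
      ((fun s => c s - (cm + c'm * Real.exp (2 * κm * s)))
        =O[atBot] fun s => Real.exp (4 * κm * s)) ∧
      ((fun s => deriv c s - 2 * c'm * κm * Real.exp (2 * κm * s))
        =O[atBot] fun s => Real.exp (4 * κm * s)) ∧
      ((fun s => a s - ap * Real.exp (κp * s)) =O[atTop] fun s => Real.exp (3 * κp * s)) ∧
      ((fun s => deriv a s - ap * κp * Real.exp (κp * s))
        =O[atTop] fun s => Real.exp (3 * κp * s)) ∧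
      ((fun s => b s - bp * Real.exp (κp * s)) =O[atTop] fun s => Real.exp (3 * κp * s)) ∧
      ((fun s => deriv b s - bp * κp * Real.exp (κp * s))
        =O[atTop] fun s => Real.exp (3 * κp * s)) ∧
      ((fun s => c s - (cp + c'p * Real.exp (2 * κp * s)))
        =O[atTop] fun s => Real.exp (4 * κp * s)) ∧
      ((fun s => deriv c s - 2 * c'p * κp * Real.exp (2 * κp * s))
        =O[atTop] fun s => Real.exp (4 * κp * s)) := by
  have hrm : 0 < rm := hrc.trans hrcm
  have hrp : 0 < rp := hrm.trans hrmp
  have hu : AnalyticOnNhd ℝ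
      (fun r => 1 / (2 * κn) * log (r - rn) + 1 / (2 * κc) * log (r - rc)) (Icc rm rp) :=
    ((analyticOnNhd_const_mul_log_sub _ rn).mono fun r hr => (hrn.trans hrm).trans_le hr.1).add
      ((analyticOnNhd_const_mul_log_sub _ rc).mono fun r hr => hrcm.trans_le hr.1)
  obtain rfl : F = _ := funext hF
  subst hcm hcp
  exact stmt_1_general hrm hrmp (analyticAt_reissnerNordstromDeSitter M Q Λ hrm.ne')
    (analyticAt_reissnerNordstromDeSitter M Q Λ hrp.ne') hFm hFp hκm hκp hκmpos hκpneg hu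
    (fun r _ => hx r) hrmem hrinv ha hb hc
end

section
/- As X → 0⁺ one has: a(h(X)) = κ_-·X + O(X³); a'(h(X)) = κ_-²·X + O(X³); b(h(X)) = (b_-·κ_- /a_-)·X + O(X³); b'(h(X)) = (b_-·κ_-²/a_-)·X + O(X³); c(h(X)) = c_- + c'_-·(κ_- /a_-)²·X² + O(X⁴); and c'(h(X)) = 2·c'_-·κ_-·(κ_- /a_-)²·X² + O(X⁴), where primes denote derivatives with respect to x. -/
open Asymptotics Filter MeasureTheory

/-!
Partial fractions of `1 / F` show that `x' = 1 / F`, so the radius solves the autonomous equation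
`dr/dx = F(r)`. It tends to the simple zero `r₋` of `F` as `x → -∞`, hence `r - r₋ = O(F(r))`, and
Taylor expansion at `r₋` gives `a' = κ₋ a + O(√F³)`, `b' = κ₋ b + O(√F³)` and
`c' = 2 κ₋ (c - c₋) + O(√F⁴)`, where `√F = O(e^{κ₋ x})`. So the derivatives inherit their expansions
from the potentials. Integrating the expansion of `a` gives `g(x) = (a₋ / κ₋) e^{κ₋ x} +
O(e^{3 κ₋ x})`, which allows `e^{κ₋ x}` to be replaced by `(κ₋ / a₋) X` in all of them.
-/

section PartialFractions

open Polynomial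

variable {K ι : Type*} [Field K] {s : Finset ι} {v : ι → K} {p q : K[X]}

theorem eq_C_leadingCoeff_mul_nodal (hv : Set.InjOn v s) (hp : p.degree = s.card)
    (hroot : ∀ i ∈ s, p.eval (v i) = 0) : p = C p.leadingCoeff * Lagrange.nodal s v := by
  have hp0 : p.leadingCoeff ≠ 0 := by
    intro h
    simp [leadingCoeff_eq_zero.1 h] at hp
  have hdeg : (C p.leadingCoeff * Lagrange.nodal s v).degree = s.card := by
    rw [degree_C_mul hp0, Lagrange.degree_nodal]
  refine eq_of_degree_le_of_eval_index_eq s hv hp.le (hp.trans hdeg.symm) ?_ fun i hi => ?_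
  · rw [leadingCoeff_mul, leadingCoeff_C, Lagrange.nodal_monic.leadingCoeff, mul_one]
  · rw [hroot i hi, eval_mul, Lagrange.eval_nodal_at_node hi, mul_zero]

theorem eval_div_eval_eq_sum (hv : Set.InjOn v s) (hp : p.degree = s.card)
    (hroot : ∀ i ∈ s, p.eval (v i) = 0) (hq : q.degree < s.card) {x : K} (hx : p.eval x ≠ 0) :
    q.eval x / p.eval x = ∑ i ∈ s, q.eval (v i) / p.derivative.eval (v i) / (x - v i) := by
  classical
  have hxv : ∀ i ∈ s, x ≠ v i := by
    rintro i hi rfl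
    exact hx (hroot i hi)
  have hfactor := eq_C_leadingCoeff_mul_nodal hv hp hroot
  have hderiv : ∀ i ∈ s, p.derivative.eval (v i) =
      p.leadingCoeff * (Lagrange.nodalWeight s v i)⁻¹ := fun i hi => by
    conv_lhs => rw [hfactor]
    rw [derivative_C_mul, eval_C_mul, Lagrange.nodalWeight_eq_eval_derivative_nodal hi, inv_inv]
  have hpx : p.eval x = p.leadingCoeff * (Lagrange.nodal s v).eval x := by
    conv_lhs => rw [hfactor]
    rw [eval_C_mul]
  have hnodal : (Lagrange.nodal s v).eval x ≠ 0 := right_ne_zero_of_mul (hpx ▸ hx)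
  rw [hpx, Lagrange.eq_interpolate hv hq, Lagrange.eval_interpolate_not_at_node _ hxv,
    mul_comm p.leadingCoeff, mul_div_mul_left _ _ hnodal, Finset.sum_div]
  refine Finset.sum_congr rfl fun i hi => ?_
  rw [hderiv i hi, ← Lagrange.eq_interpolate hv hq]
  field

theorem hasDerivAt_sum_residue_mul_log {v : ι → ℝ} {p q : ℝ[X]} (hv : Set.InjOn v s)
    (hp : p.degree = s.card) (hroot : ∀ i ∈ s, p.eval (v i) = 0) (hq : q.degree < s.card) {x : ℝ}
    (hx : p.eval x ≠ 0) :
    HasDerivAt (fun y => ∑ i ∈ s, q.eval (v i) / p.derivative.eval (v i) * Real.log (y - v i))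
      (q.eval x / p.eval x) x := by
  rw [eval_div_eval_eq_sum hv hp hroot hq hx]
  refine HasDerivAt.fun_sum fun i hi => ?_
  have hxv : x - v i ≠ 0 := sub_ne_zero.2 fun h => hx (h ▸ hroot i hi)
  simpa only [mul_one_div] using (((hasDerivAt_id' x).sub_const (v i)).log hxv).const_mul
    (q.eval (v i) / p.derivative.eval (v i))

end PartialFractions

section RightInverse

open scoped Topology

variable {f f' φ : ℝ → ℝ} {a b : ℝ}

theorem strictMonoOn_Ioo_of_hasDerivAt_pos (hf : ∀ r ∈ Set.Ioo a b, HasDerivAt f (f' r) r)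
    (hf' : ∀ r ∈ Set.Ioo a b, 0 < f' r) : StrictMonoOn f (Set.Ioo a b) := by
  refine strictMonoOn_of_deriv_pos (convex_Ioo a b)
    (fun r hr => (hf r hr).continuousAt.continuousWithinAt) fun r hr => ?_
  rw [interior_Ioo] at hr
  rw [(hf r hr).deriv]
  exact hf' r hr

theorem strictMono_of_rightInverse (hf : StrictMonoOn f (Set.Ioo a b))
    (hφ : ∀ s, φ s ∈ Set.Ioo a b) (hfφ : Function.RightInverse φ f) : StrictMono φ :=
  fun s t hst => (hf.lt_iff_lt (hφ s) (hφ t)).1 (by rwa [hfφ, hfφ])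

theorem range_eq_Ioo_of_rightInverse (hf : StrictMonoOn f (Set.Ioo a b))
    (hφ : ∀ s, φ s ∈ Set.Ioo a b) (hfφ : Function.RightInverse φ f) :
    Set.range φ = Set.Ioo a b :=
  (Set.range_subset_iff.2 hφ).antisymm
    fun r hr => ⟨f r, hf.injOn (hφ (f r)) hr (hfφ (f r))⟩

theorem tendsto_atBot_of_rightInverse (hab : a < b) (hf : StrictMonoOn f (Set.Ioo a b))
    (hφ : ∀ s, φ s ∈ Set.Ioo a b) (hfφ : Function.RightInverse φ f) :
    Tendsto φ atBot (𝓝 a) := by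
  refine tendsto_atBot_isGLB (strictMono_of_rightInverse hf hφ hfφ).monotone ?_
  rw [range_eq_Ioo_of_rightInverse hf hφ hfφ]
  exact isGLB_Ioo hab

theorem hasDerivAt_of_rightInverse (hf : ∀ r ∈ Set.Ioo a b, HasDerivAt f (f' r) r)
    (hf' : ∀ r ∈ Set.Ioo a b, 0 < f' r) (hφ : ∀ s, φ s ∈ Set.Ioo a b)
    (hfφ : Function.RightInverse φ f) (s : ℝ) : HasDerivAt φ (f' (φ s))⁻¹ s := by
  have hmono := strictMonoOn_Ioo_of_hasDerivAt_pos hf hf'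
  have hrange : (Set.range φ).OrdConnected :=
    range_eq_Ioo_of_rightInverse hmono hφ hfφ ▸ Set.ordConnected_Ioo
  have hcont : Continuous φ :=
    ((strictMono_of_rightInverse hmono hφ hfφ).isEmbedding_of_ordConnected hrange).continuous
  exact (hf _ (hφ s)).of_local_left_inverse hcont.continuousAt (hf' _ (hφ s)).ne'
    (Eventually.of_forall hfφ)

end RightInverse

section SimpleZero

open scoped Topology

variable {E : Type*} [NormedAddCommGroup E] [NormedSpace ℝ E] {f : ℝ → E} {a : ℝ}

theorem isBigO_deriv_sub_deriv (hf : ContDiffAt ℝ 2 f a) :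
    (fun x => deriv f x - deriv f a) =O[𝓝 a] fun x => x - a :=
  ((hf.derivWithin (m := 1) (by norm_num)).differentiableAt one_ne_zero).isBigO_sub

theorem isBigO_sub_sub_smul_deriv (hf : ContDiffAt ℝ 2 f a) :
    (fun x => f x - f a - (x - a) • deriv f a) =O[𝓝 a] fun x => (x - a) ^ 2 := by
  have hdiff : ∀ᶠ x in 𝓝 a, DifferentiableAt ℝ f x :=
    (hf.eventually (by simp)).mono fun x hx => hx.differentiableAt two_ne_zero
  obtain ⟨C, hC₀, hC⟩ := (isBigO_deriv_sub_deriv hf).exists_pos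
  obtain ⟨ε, hε, hball⟩ := Metric.eventually_nhds_iff_ball.1 (hdiff.and hC.bound)
  refine IsBigO.of_bound C ?_
  filter_upwards [Metric.ball_mem_nhds a hε] with x hx
  have hsub : Metric.closedBall a (dist x a) ⊆ Metric.ball a ε := Metric.closedBall_subset_ball hx
  have hremainder : ∀ y ∈ Metric.closedBall a (dist x a),
      HasDerivWithinAt (fun y => f y - (y - a) • deriv f a) (deriv f y - deriv f a)
        (Metric.closedBall a (dist x a)) y := fun y hy => by
    simpa using ((hball y (hsub hy)).1.hasDerivAt.fun_sub
      (((hasDerivAt_id' y).sub_const a).smul_const (deriv f a))).hasDerivWithinAt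
  have hbound : ∀ y ∈ Metric.closedBall a (dist x a), ‖deriv f y - deriv f a‖ ≤ C * ‖x - a‖ :=
    fun y hy => (hball y (hsub hy)).2.trans (by
      simpa only [dist_eq_norm] using mul_le_mul_of_nonneg_left hy hC₀.le)
  have hmvt := (convex_closedBall a (dist x a)).norm_image_sub_le_of_norm_hasDerivWithin_le
    hremainder hbound (Metric.mem_closedBall_self dist_nonneg) (Metric.mem_closedBall.2 le_rfl)
  calc ‖f x - f a - (x - a) • deriv f a‖
      = ‖f x - (x - a) • deriv f a - (f a - (a - a) • deriv f a)‖ := by simp [sub_right_comm]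
    _ ≤ C * ‖x - a‖ * ‖x - a‖ := hmvt
    _ = C * ‖(x - a) ^ 2‖ := by rw [norm_pow]; ring

variable {F V U r : ℝ → ℝ} {r₀ : ℝ} {l : Filter ℝ}

theorem isBigO_sub_sqrt_sq_of_simple_zero (hF₀ : F r₀ = 0) (hF' : deriv F r₀ ≠ 0)
    (hlim : Tendsto r l (𝓝 r₀)) (hpos : ∀ᶠ s in l, 0 < F (r s)) :
    (fun s => r s - r₀) =O[l] fun s => √(F (r s)) ^ 2 := by
  have hF : HasDerivAt F (deriv F r₀) r₀ := (differentiableAt_of_deriv_ne_zero hF').hasDerivAt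
  refine ((hF.isTheta_sub hF').isBigO_symm.comp_tendsto
    (hlim.prodMk tendsto_const_pure)).congr' EventuallyEq.rfl ?_
  filter_upwards [hpos] with s hs
  simp only [Function.comp_apply, hF₀, sub_zero, Real.sq_sqrt hs.le]

theorem hasDerivAt_comp_mul_sqrt_comp {s : ℝ} (hr : HasDerivAt r (F (r s)) s)
    (hV : DifferentiableAt ℝ V (r s)) (hF : DifferentiableAt ℝ F (r s)) (hpos : 0 < F (r s)) :
    HasDerivAt (fun t => V (r t) * √(F (r t)))
      (√(F (r s)) * (deriv V (r s) * F (r s) + V (r s) * deriv F (r s) / 2)) s := by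
  have hsqrt : HasDerivAt (fun t => √(F (r t))) _ s :=
    (hF.hasDerivAt.comp s hr).sqrt hpos.ne'
  refine ((hV.hasDerivAt.comp s hr).mul hsqrt).congr_deriv ?_
  have hsqrt_ne : √(F (r s)) ≠ 0 := (Real.sqrt_pos.2 hpos).ne'
  simp only [Function.comp_apply]
  field_simp
  rw [Real.sq_sqrt hpos.le]

theorem isBigO_deriv_mul_add_mul_deriv_sub (hF : ContDiffAt ℝ 2 F r₀) (hF₀ : F r₀ = 0)
    (hV : ContDiffAt ℝ 1 V r₀) :
    (fun x => deriv V x * F x + V x * ((deriv F x - deriv F r₀) / 2))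
      =O[𝓝 r₀] fun x => x - r₀ := by
  have hF_sub : F =O[𝓝 r₀] fun x => x - r₀ := by
    simpa only [hF₀, sub_zero] using (hF.differentiableAt two_ne_zero).isBigO_sub
  have hF'_sub : (fun x => (deriv F x - deriv F r₀) / 2) =O[𝓝 r₀] fun x => x - r₀ := by
    simpa only [div_eq_inv_mul] using (isBigO_deriv_sub_deriv hF).const_mul_left 2⁻¹
  have hV_one : V =O[𝓝 r₀] fun _ => (1 : ℝ) := hV.continuousAt.tendsto.isBigO_one ℝ
  have hV'_one : deriv V =O[𝓝 r₀] fun _ => (1 : ℝ) :=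
    (hV.derivWithin (m := 0) (by norm_num)).continuousAt.tendsto.isBigO_one ℝ
  simpa only [one_mul] using (hV'_one.mul hF_sub).add (hV_one.mul hF'_sub)

theorem isBigO_deriv_comp_mul_sqrt_comp_sub (hr : ∀ᶠ s in l, HasDerivAt r (F (r s)) s)
    (hlim : Tendsto r l (𝓝 r₀)) (hpos : ∀ᶠ s in l, 0 < F (r s))
    (hF : ContDiffAt ℝ 2 F r₀) (hF₀ : F r₀ = 0) (hF' : deriv F r₀ ≠ 0) (hV : ContDiffAt ℝ 1 V r₀) :
    (fun s => deriv (fun t => V (r t) * √(F (r t))) s -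
      deriv F r₀ / 2 * (V (r s) * √(F (r s)))) =O[l] fun s => √(F (r s)) ^ 3 := by
  have hfactor := ((isBigO_deriv_mul_add_mul_deriv_sub hF hF₀ hV).comp_tendsto hlim).trans
    (isBigO_sub_sqrt_sq_of_simple_zero hF₀ hF' hlim hpos)
  refine ((isBigO_refl (fun s => √(F (r s))) l).mul hfactor).congr' ?_
    (.of_eq <| funext fun s => by ring)
  filter_upwards [hr, hpos, hlim.eventually (hV.eventually (by simp)),
    hlim.eventually (hF.eventually (by simp))] with s hrs hpos_s hVs hFs
  rw [(hasDerivAt_comp_mul_sqrt_comp hrs (hVs.differentiableAt one_ne_zero)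
    (hFs.differentiableAt two_ne_zero) hpos_s).deriv, Function.comp_apply]
  ring

theorem isBigO_mul_deriv_sub (hF : ContDiffAt ℝ 2 F r₀) (hF₀ : F r₀ = 0)
    (hU : ContDiffAt ℝ 2 U r₀) :
    (fun x => deriv U x * F x - deriv F r₀ * (U x - U r₀)) =O[𝓝 r₀] fun x => (x - r₀) ^ 2 := by
  have hF_sub : F =O[𝓝 r₀] fun x => x - r₀ := by
    simpa only [hF₀, sub_zero] using (hF.differentiableAt two_ne_zero).isBigO_sub
  have hprod : (fun x => (deriv U x - deriv U r₀) * F x) =O[𝓝 r₀] fun x => (x - r₀) ^ 2 := by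
    simpa only [← sq] using (isBigO_deriv_sub_deriv hU).mul hF_sub
  refine ((hprod.add ((isBigO_sub_sub_smul_deriv hF).const_mul_left (deriv U r₀))).sub
    ((isBigO_sub_sub_smul_deriv hU).const_mul_left (deriv F r₀))).congr_left fun x => ?_
  simp only [hF₀, smul_eq_mul]
  ring

theorem isBigO_deriv_comp_sub (hr : ∀ᶠ s in l, HasDerivAt r (F (r s)) s)
    (hlim : Tendsto r l (𝓝 r₀)) (hpos : ∀ᶠ s in l, 0 < F (r s))
    (hF : ContDiffAt ℝ 2 F r₀) (hF₀ : F r₀ = 0) (hF' : deriv F r₀ ≠ 0) (hU : ContDiffAt ℝ 2 U r₀) :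
    (fun s => deriv (fun t => U (r t)) s - deriv F r₀ * (U (r s) - U r₀))
      =O[l] fun s => √(F (r s)) ^ 4 := by
  have hdist_sq : (fun s => (r s - r₀) ^ 2) =O[l] fun s => √(F (r s)) ^ 4 := by
    simpa only [← pow_mul] using (isBigO_sub_sqrt_sq_of_simple_zero hF₀ hF' hlim hpos).pow 2
  refine (((isBigO_mul_deriv_sub hF hF₀ hU).comp_tendsto hlim).trans hdist_sq).congr' ?_
    EventuallyEq.rfl
  filter_upwards [hr, hlim.eventually (hU.eventually (by simp))] with s hrs hUs
  have hchain : HasDerivAt (fun t => U (r t)) (deriv U (r s) * F (r s)) s :=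
    (hUs.differentiableAt two_ne_zero).hasDerivAt.comp s hrs
  rw [hchain.deriv, Function.comp_apply]

end SimpleZero

section Expansion

open scoped Topology

variable {α : Type*} {l : Filter α} {x y e u g : α → ℝ} {k β : ℝ}

theorem isBigO_pow_sub_pow {m : ℕ} (hx : x =O[l] e) (hy : y =O[l] e)
    (hxy : (fun s => x s - y s) =O[l] fun s => e s ^ (m + 1)) (n : ℕ) :
    (fun s => x s ^ n - y s ^ n) =O[l] fun s => e s ^ (n + m) := by
  induction n with
  | zero => simpa using isBigO_zero _ l
  | succ n ih =>
    have hleft := (hx.mul ih).congr_right fun s => (pow_succ' (e s) (n + m)).symm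
    have hright := (hxy.mul (hy.pow n)).congr_right fun s => (pow_add (e s) (m + 1) n).symm
    refine (hleft.add (hright.congr_right fun s => ?_)).congr (fun s => ?_) fun s => ?_
    all_goals ring

theorem isBigO_of_sub_const_mul_isBigO_pow {m : ℕ} (he : Tendsto e l (𝓝 0))
    (hg : (fun s => g s - k * e s) =O[l] fun s => e s ^ (m + 1)) : g =O[l] e := by
  have hpow : (fun s => e s ^ (m + 1)) =O[l] e := by
    simpa [pow_succ] using ((he.isBigO_one ℝ).pow m).mul (isBigO_refl e l)
  simpa using (hg.trans hpow).add ((isBigO_refl e l).const_mul_left k)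

theorem isBigO_of_sub_const_mul_isBigO_pow_rev {m : ℕ} (hm : m ≠ 0) (he : Tendsto e l (𝓝 0))
    (hk : k ≠ 0) (hg : (fun s => g s - k * e s) =O[l] fun s => e s ^ (m + 1)) : e =O[l] g := by
  have hpow : (fun s => e s ^ (m + 1)) =o[l] e := by
    have hzero : (fun s => e s ^ m) =o[l] fun _ => (1 : ℝ) := by
      simpa [isLittleO_one_iff, hm] using he.pow m
    simpa only [pow_succ, one_mul] using hzero.mul_isBigO (isBigO_refl e l)
  have hremainder : (fun s => g s - k * e s) =o[l] fun s => k * e s :=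
    (hg.trans_isLittleO hpow).const_mul_right hk
  simpa only [sub_add_cancel, isBigO_const_mul_left_iff hk] using hremainder.right_isBigO_add

theorem isBigO_sub_div_pow_mul_pow {m n : ℕ} (hm : m ≠ 0) (he : Tendsto e l (𝓝 0)) (hk : k ≠ 0)
    (hg : (fun s => g s - k * e s) =O[l] fun s => e s ^ (m + 1))
    (hu : (fun s => u s - β * e s ^ n) =O[l] fun s => e s ^ (n + m)) :
    (fun s => u s - β / k ^ n * g s ^ n) =O[l] fun s => g s ^ (n + m) := by
  have hpow := isBigO_pow_sub_pow (isBigO_of_sub_const_mul_isBigO_pow he hg)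
    ((isBigO_refl e l).const_mul_left k) hg n
  refine ((hu.sub (hpow.const_mul_left (β / k ^ n))).congr_left fun s => ?_).trans
    ((isBigO_of_sub_const_mul_isBigO_pow_rev hm he hk hg).pow (n + m))
  have hkn : k ^ n ≠ 0 := pow_ne_zero n hk
  field_simp
  ring

end Expansion

section Primitive

open scoped Topology

theorem isBigO_integral_Iic_exp {E : Type*} [NormedAddCommGroup E] [NormedSpace ℝ E] {f : ℝ → E}
    {ν : ℝ} (hν : 0 < ν) (hf : f =O[atBot] fun s => Real.exp (ν * s)) :
    (fun t => ∫ s in Set.Iic t, f s) =O[atBot] fun t => Real.exp (ν * t) := by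
  obtain ⟨C, hC⟩ := hf.bound
  obtain ⟨T, hT⟩ := eventually_atBot.1 hC
  refine IsBigO.of_bound (C / ν) ?_
  filter_upwards [eventually_le_atBot T] with t ht
  calc ‖∫ s in Set.Iic t, f s‖
      ≤ ∫ s in Set.Iic t, C * Real.exp (ν * s) := by
        refine norm_integral_le_of_norm_le ((integrableOn_exp_mul_Iic hν t).const_mul C) ?_
        filter_upwards [ae_restrict_mem measurableSet_Iic] with s hs
        simpa only [Real.norm_of_nonneg (Real.exp_pos _).le] using hT s (hs.trans ht)
    _ = C / ν * ‖Real.exp (ν * t)‖ := by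
        rw [integral_const_mul, integral_exp_mul_Iic hν, Real.norm_of_nonneg (Real.exp_pos _).le]
        ring

theorem isBigO_integral_Iic_sub_exp {f : ℝ → ℝ} {κ ν c : ℝ} (hκ : 0 < κ) (hν : 0 < ν)
    (hint : Integrable f)
    (hf : (fun s => f s - c * Real.exp (κ * s)) =O[atBot] fun s => Real.exp (ν * s)) :
    (fun t => (∫ s in Set.Iic t, f s) - c / κ * Real.exp (κ * t))
      =O[atBot] fun t => Real.exp (ν * t) := by
  refine (isBigO_integral_Iic_exp hν hf).congr_left fun t => ?_
  rw [integral_sub hint.integrableOn ((integrableOn_exp_mul_Iic hκ t).const_mul c),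
    integral_const_mul, integral_exp_mul_Iic hκ]
  ring

theorem tendsto_atBot_of_monotone_of_rightInverse {g h : ℝ → ℝ} (hmono : Monotone g)
    (hpos : ∀ t, 0 < g t) (hgh : ∀ᶠ X in 𝓝[>] 0, g (h X) = X) : Tendsto h (𝓝[>] 0) atBot := by
  refine tendsto_atBot.2 fun B => ?_
  filter_upwards [hgh, Ioo_mem_nhdsGT (hpos B)] with X hX hXB
  by_contra! hlt
  exact (hX ▸ hmono hlt.le).not_gt hXB.2

theorem monotone_integral_Iic {f : ℝ → ℝ} (hf : 0 ≤ f) (hint : Integrable f) :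
    Monotone fun t => ∫ s in Set.Iic t, f s := fun _ _ hst =>
  setIntegral_mono_set hint.integrableOn (Eventually.of_forall hf)
    (Set.Iic_subset_Iic.2 hst).eventuallyLE

theorem integral_Iic_pos {f : ℝ → ℝ} (hf : ∀ s, 0 < f s) (hint : Integrable f) (t : ℝ) :
    0 < ∫ s in Set.Iic t, f s := by
  have hsupport : Function.support f = Set.univ := Function.support_eq_univ fun s => (hf s).ne'
  rw [setIntegral_pos_iff_support_of_nonneg_ae (Eventually.of_forall fun s => (hf s).le)
    hint.integrableOn, hsupport, Set.univ_inter, Real.volume_Iic]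
  exact ENNReal.zero_lt_top

theorem isBigO_comp_of_eventually_rightInverse {α : Type*} {l : Filter α} {g u : α → ℝ}
    {h : ℝ → α} {β : ℝ} {n p : ℕ} (hh : Tendsto h (𝓝[>] 0) l) (hgh : ∀ᶠ X in 𝓝[>] 0, g (h X) = X)
    (hu : (fun s => u s - β * g s ^ n) =O[l] fun s => g s ^ p) :
    (fun X => u (h X) - β * X ^ n) =O[𝓝[>] 0] fun X => X ^ p := by
  refine (hu.comp_tendsto hh).congr' ?_ ?_
  all_goals
    filter_upwards [hgh] with X hX
    simp only [Function.comp_apply, hX]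

theorem tendsto_exp_mul_atBot {κ : ℝ} (hκ : 0 < κ) :
    Tendsto (fun s => Real.exp (κ * s)) atBot (𝓝 0) :=
  Real.tendsto_exp_atBot.comp (tendsto_id.const_mul_atBot hκ)

theorem exp_ofNat_mul_mul (n : ℕ) [n.AtLeastTwo] (κ s : ℝ) :
    Real.exp (ofNat(n) * κ * s) = Real.exp (κ * s) ^ (ofNat(n) : ℕ) := by
  rw [mul_assoc, ← Nat.cast_ofNat, Real.exp_nat_mul]

theorem tendsto_atBot_of_integral_Iic_eq {f h : ℝ → ℝ} (hf : ∀ s, 0 < f s) (hint : Integrable f)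
    (hfh : ∀ᶠ X in 𝓝[>] 0, ∫ s in Set.Iic (h X), f s = X) : Tendsto h (𝓝[>] 0) atBot :=
  tendsto_atBot_of_monotone_of_rightInverse (monotone_integral_Iic (fun s => (hf s).le) hint)
    (integral_Iic_pos hf hint) hfh

theorem isBigO_comp_and_isBigO_deriv_comp {α : Type*} {l : Filter α} {e g u u' : α → ℝ} {h : ℝ → α}
    {k β μ : ℝ} {m n : ℕ} (hm : m ≠ 0) (he : Tendsto e l (𝓝 0)) (hk : k ≠ 0)
    (hg : (fun s => g s - k * e s) =O[l] fun s => e s ^ (m + 1))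
    (hh : Tendsto h (𝓝[>] 0) l) (hgh : ∀ᶠ X in 𝓝[>] 0, g (h X) = X)
    (hu : (fun s => u s - β * e s ^ n) =O[l] fun s => e s ^ (n + m))
    (hu' : (fun s => u' s - μ * u s) =O[l] fun s => e s ^ (n + m)) :
    ((fun X => u (h X) - β / k ^ n * X ^ n) =O[𝓝[>] 0] fun X => X ^ (n + m)) ∧
    ((fun X => u' (h X) - μ * (β / k ^ n) * X ^ n) =O[𝓝[>] 0] fun X => X ^ (n + m)) := by
  have hu'_expansion : (fun s => u' s - μ * β * e s ^ n) =O[l] fun s => e s ^ (n + m) :=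
    (hu'.add (hu.const_mul_left μ)).congr_left fun s => by ring
  rw [← mul_div_assoc]
  exact ⟨isBigO_comp_of_eventually_rightInverse hh hgh (isBigO_sub_div_pow_mul_pow hm he hk hg hu),
    isBigO_comp_of_eventually_rightInverse hh hgh
      (isBigO_sub_div_pow_mul_pow hm he hk hg hu'_expansion)⟩

end Primitive

section ReissnerNordstromDeSitter

open Polynomial

/-- The metric function `1 - 2M/r + Q²/r² - Λr²/3` of the Reissner–Nordström–de Sitter black hole
of mass `M` and charge `Q` with cosmological constant `Λ`. -/
noncomputable def metricFunction (M Q Λ r : ℝ) : ℝ :=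
  1 - 2 * M / r + Q ^ 2 / r ^ 2 - Λ * r ^ 2 / 3

/-- The quartic `r² F(r)`, with `F` the metric function: its nonzero roots are the horizons. -/
noncomputable def horizonPolynomial (M Q Λ : ℝ) : ℝ[X] :=
  C (-(Λ / 3)) * X ^ 4 + X ^ 2 - C (2 * M) * X + C (Q ^ 2)

variable {M Q Λ r : ℝ}

theorem contDiffAt_metricFunction {n : WithTop ℕ∞} (hr : r ≠ 0) :
    ContDiffAt ℝ n (metricFunction M Q Λ) r := by
  unfold metricFunction
  fun_prop (disch := simp [hr])

theorem eval_horizonPolynomial (hr : r ≠ 0) :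
    (horizonPolynomial M Q Λ).eval r = r ^ 2 * metricFunction M Q Λ r := by
  simp only [horizonPolynomial, metricFunction, eval_add, eval_sub, eval_mul, eval_C, eval_pow,
    eval_X]
  field

theorem degree_horizonPolynomial (hΛ : Λ ≠ 0) : (horizonPolynomial M Q Λ).degree = 4 := by
  unfold horizonPolynomial
  compute_degree!

theorem eval_derivative_horizonPolynomial (hr : r ≠ 0) (hroot : metricFunction M Q Λ r = 0) :
    (horizonPolynomial M Q Λ).derivative.eval r = r ^ 2 * deriv (metricFunction M Q Λ) r := by
  have hF : HasDerivAt (metricFunction M Q Λ) (deriv (metricFunction M Q Λ) r) r :=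
    ((contDiffAt_metricFunction (n := 1) hr).differentiableAt one_ne_zero).hasDerivAt
  have hprod := ((hasDerivAt_id' r).fun_pow 2).fun_mul hF
  have heq : (fun y => (horizonPolynomial M Q Λ).eval y) =ᶠ[nhds r]
      fun y => y ^ 2 * metricFunction M Q Λ y :=
    (eventually_ne_nhds hr).mono fun y hy => eval_horizonPolynomial hy
  rw [((horizonPolynomial M Q Λ).hasDerivAt r).unique (hprod.congr_of_eventuallyEq heq), hroot]
  ring

theorem hasDerivAt_sum_inv_deriv_mul_log {v : Fin 4 → ℝ} (hΛ : Λ ≠ 0) (hv : Function.Injective v)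
    (hv₀ : ∀ i, v i ≠ 0) (hroot : ∀ i, metricFunction M Q Λ (v i) = 0) (hr : r ≠ 0)
    (hFr : metricFunction M Q Λ r ≠ 0) :
    HasDerivAt (fun y => ∑ i, (deriv (metricFunction M Q Λ) (v i))⁻¹ * Real.log (y - v i))
      (metricFunction M Q Λ r)⁻¹ r := by
  have hlog := hasDerivAt_sum_residue_mul_log (s := Finset.univ) (p := horizonPolynomial M Q Λ)
    (q := X ^ 2) (x := r) hv.injOn (by simp [degree_horizonPolynomial hΛ])
    (fun i _ => by rw [eval_horizonPolynomial (hv₀ i), hroot, mul_zero])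
    (by rw [degree_X_pow]; norm_num) (by simp [eval_horizonPolynomial hr, hr, hFr])
  have hresidue (y z : ℝ) (hy : y ≠ 0) : y ^ 2 / (y ^ 2 * z) = z⁻¹ := by field
  simpa only [eval_pow, eval_X, eval_horizonPolynomial hr, hresidue r _ hr,
    eval_derivative_horizonPolynomial (hv₀ _) (hroot _), hresidue (v _) _ (hv₀ _)] using hlog

theorem hasDerivAt_reggeWheeler {rn rc rm rp κn κc κm κp : ℝ} {x : ℝ → ℝ}
    (hΛ : Λ ≠ 0) (hrn : rn < 0) (hrc : 0 < rc) (hrcm : rc < rm) (hrmp : rm < rp)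
    (hFn : metricFunction M Q Λ rn = 0) (hFc : metricFunction M Q Λ rc = 0)
    (hFm : metricFunction M Q Λ rm = 0) (hFp : metricFunction M Q Λ rp = 0)
    (hκn : κn = deriv (metricFunction M Q Λ) rn / 2)
    (hκc : κc = deriv (metricFunction M Q Λ) rc / 2)
    (hκm : κm = deriv (metricFunction M Q Λ) rm / 2)
    (hκp : κp = deriv (metricFunction M Q Λ) rp / 2)
    (hx : ∀ y, x y = 1 / (2 * κn) * Real.log (y - rn) + 1 / (2 * κc) * Real.log (y - rc)
      + 1 / (2 * κm) * Real.log (y - rm) + 1 / (2 * κp) * Real.log (rp - y))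
    (hr : r ≠ 0) (hFr : metricFunction M Q Λ r ≠ 0) :
    HasDerivAt x (metricFunction M Q Λ r)⁻¹ r := by
  have hrnc : rn < rc := hrn.trans hrc
  have hmono : StrictMono ![rn, rc, rm, rp] := by
    simp [Fin.strictMono_iff_lt_succ, Fin.forall_fin_succ, *]
  have hne : ∀ i, ![rn, rc, rm, rp] i ≠ 0 := by
    simp [Fin.forall_fin_succ, hrn.ne, hrc.ne', (hrc.trans hrcm).ne',
      (hrc.trans (hrcm.trans hrmp)).ne']
  have hroot : ∀ i, metricFunction M Q Λ (![rn, rc, rm, rp] i) = 0 := by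
    simp [Fin.forall_fin_succ, *]
  convert hasDerivAt_sum_inv_deriv_mul_log hΛ hmono.injective hne hroot hr hFr using 1
  funext y
  have hlog : Real.log (rp - y) = Real.log (y - rp) := by rw [← neg_sub, Real.log_neg_eq_log]
  simp [hx, hlog, Fin.sum_univ_four, hκn, hκc, hκm, hκp, mul_div_cancel₀]

end ReissnerNordstromDeSitter

open scoped Topology in
theorem stmt_4_general {F r a b c g h : ℝ → ℝ} {rm κ m e cm am bm c'm : ℝ} (hrm : 0 < rm)
    (hF : ContDiffAt ℝ 2 F rm) (hFm : F rm = 0) (hκ : κ = deriv F rm / 2) (hκpos : 0 < κ)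
    (hr : ∀ s, HasDerivAt r (F (r s)) s) (hr_lim : Tendsto r atBot (𝓝 rm))
    (hr_pos : ∀ s, 0 < r s) (hF_pos : ∀ s, 0 < F (r s))
    (ha : ∀ s, a s = √(F (r s)) / r s) (hb : ∀ s, b s = m * √(F (r s)))
    (hc : ∀ s, c s = e / r s) (hcm : cm = e / rm) (ham : am ≠ 0)
    (haas : (fun s => a s - am * Real.exp (κ * s)) =O[atBot] fun s => Real.exp (3 * κ * s))
    (hbas : (fun s => b s - bm * Real.exp (κ * s)) =O[atBot] fun s => Real.exp (3 * κ * s))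
    (hcas : (fun s => c s - (cm + c'm * Real.exp (2 * κ * s)))
      =O[atBot] fun s => Real.exp (4 * κ * s))
    (haint : Integrable a) (hg : ∀ t, g t = ∫ s in Set.Iic t, a s)
    (hgh : ∀ᶠ X in 𝓝[>] 0, g (h X) = X) :
    ((fun X => a (h X) - κ * X) =O[𝓝[>] 0] fun X => X ^ 3) ∧
    ((fun X => deriv a (h X) - κ ^ 2 * X) =O[𝓝[>] 0] fun X => X ^ 3) ∧
    ((fun X => b (h X) - bm * κ / am * X) =O[𝓝[>] 0] fun X => X ^ 3) ∧
    ((fun X => deriv b (h X) - bm * κ ^ 2 / am * X) =O[𝓝[>] 0] fun X => X ^ 3) ∧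
    ((fun X => c (h X) - (cm + c'm * (κ / am) ^ 2 * X ^ 2)) =O[𝓝[>] 0] fun X => X ^ 4) ∧
    ((fun X => deriv c (h X) - 2 * c'm * κ * (κ / am) ^ 2 * X ^ 2)
      =O[𝓝[>] 0] fun X => X ^ 4) := by
  subst hcm
  obtain rfl : a = fun s => (r s)⁻¹ * √(F (r s)) := funext fun s => by rw [ha, div_eq_inv_mul]
  obtain rfl : b = fun s => m * √(F (r s)) := funext hb
  obtain rfl : c = fun s => e / r s := funext hc
  obtain rfl : g = fun t => ∫ s in Set.Iic t, (r s)⁻¹ * √(F (r s)) := funext hg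
  have hr_ev : ∀ᶠ s in atBot, HasDerivAt r (F (r s)) s := .of_forall hr
  have hF_ev : ∀ᶠ s in atBot, 0 < F (r s) := .of_forall hF_pos
  have hF'rm : deriv F rm ≠ 0 := fun h0 => by simp [h0, hκ] at hκpos
  have hh : Tendsto h (𝓝[>] 0) atBot := tendsto_atBot_of_integral_Iic_eq
    (fun s => mul_pos (inv_pos.2 (hr_pos s)) (Real.sqrt_pos.2 (hF_pos s))) haint hgh
  have hexp : Tendsto (fun s => Real.exp (κ * s)) atBot (𝓝 0) := tendsto_exp_mul_atBot hκpos
  have hg_exp := isBigO_integral_Iic_sub_exp hκpos (mul_pos three_pos hκpos) haint haas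
  simp only [exp_ofNat_mul_mul] at haas hbas hcas hg_exp
  have hsqrt : (fun s => √(F (r s))) =O[atBot] fun s => Real.exp (κ * s) :=
    ((hr_lim.isBigO_one ℝ).mul (isBigO_of_sub_const_mul_isBigO_pow hexp haas)).congr
      (fun s => mul_inv_cancel_left₀ (hr_pos s).ne' _) fun s => one_mul _
  have ha' := (isBigO_deriv_comp_mul_sqrt_comp_sub hr_ev hr_lim hF_ev hF hFm hF'rm
    (contDiffAt_inv ℝ hrm.ne')).trans (hsqrt.pow 3)
  have hb' := (isBigO_deriv_comp_mul_sqrt_comp_sub hr_ev hr_lim hF_ev hF hFm hF'rm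
    (contDiffAt_const (c := m))).trans (hsqrt.pow 3)
  have hc' := (isBigO_deriv_comp_sub hr_ev hr_lim hF_ev hF hFm hF'rm
    (U := fun y => e / y) (contDiffAt_const.div contDiffAt_id hrm.ne')).trans (hsqrt.pow 4)
  have hk : am / κ ≠ 0 := div_ne_zero ham hκpos.ne'
  obtain ⟨ha_X, ha'_X⟩ := isBigO_comp_and_isBigO_deriv_comp (n := 1) two_ne_zero hexp hk hg_exp
    hh hgh (by simpa only [pow_one] using haas) ha'
  obtain ⟨hb_X, hb'_X⟩ := isBigO_comp_and_isBigO_deriv_comp (n := 1) two_ne_zero hexp hk hg_exp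
    hh hgh (by simpa only [pow_one] using hbas) hb'
  obtain ⟨hc_X, hc'_X⟩ := isBigO_comp_and_isBigO_deriv_comp (n := 2) two_ne_zero hexp hk hg_exp
    hh hgh (by simpa only [sub_sub] using hcas) hc'
  rw [← hκ] at ha'_X hb'_X
  rw [show deriv F rm = 2 * κ by rw [hκ]; ring] at hc'_X
  refine ⟨ha_X.congr_left fun X => ?_, ha'_X.congr_left fun X => ?_, hb_X.congr_left fun X => ?_,
    hb'_X.congr_left fun X => ?_, hc_X.congr_left fun X => ?_, hc'_X.congr_left fun X => ?_⟩
  all_goals field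

/-- Asymptotics of the potentials in the Liouville variable `X = g(x)`
as `X → 0⁺`: `a(h(X)) = κ₋X + O(X³)`, `a'(h(X)) = κ₋²X + O(X³)`,
`b(h(X)) = (b₋κ₋/a₋)X + O(X³)`, `b'(h(X)) = (b₋κ₋²/a₋)X + O(X³)`,
`c(h(X)) = c₋ + c'₋(κ₋/a₋)²X² + O(X⁴)`, `c'(h(X)) = 2c'₋κ₋(κ₋/a₋)²X² + O(X⁴)`. -/
theorem stmt_4 (M Q Λ : ℝ) (hM : 0 < M) (hΛ : 0 < Λ)
    (rn rc rm rp : ℝ) (hrn : rn < 0) (hrc : 0 < rc) (hrcm : rc < rm) (hrmp : rm < rp)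
    (F : ℝ → ℝ)
    (hF : ∀ r, F r = 1 - 2 * M / r + Q ^ 2 / r ^ 2 - Λ * r ^ 2 / 3)
    (hFn : F rn = 0) (hFc : F rc = 0) (hFm : F rm = 0) (hFp : F rp = 0)
    (hFpos : ∀ r ∈ Set.Ioo rm rp, 0 < F r)
    (κn κc κm κp : ℝ)
    (hκn : κn = deriv F rn / 2) (hκc : κc = deriv F rc / 2)
    (hκm : κm = deriv F rm / 2) (hκp : κp = deriv F rp / 2)
    (hκmpos : 0 < κm) (hκpneg : κp < 0)
    (x : ℝ → ℝ)
    (hx : ∀ r, x r = 1 / (2 * κn) * Real.log (r - rn) + 1 / (2 * κc) * Real.log (r - rc)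
      + 1 / (2 * κm) * Real.log (r - rm) + 1 / (2 * κp) * Real.log (rp - r))
    (rfun : ℝ → ℝ)
    (hrmem : ∀ s, rfun s ∈ Set.Ioo rm rp) (hrinv : ∀ s, x (rfun s) = s)
    (m q : ℝ) (a b c : ℝ → ℝ)
    (ha : ∀ s, a s = Real.sqrt (F (rfun s)) / rfun s)
    (hb : ∀ s, b s = m * Real.sqrt (F (rfun s)))
    (hc : ∀ s, c s = q * Q / rfun s)
    (cm cp : ℝ) (hcm : cm = q * Q / rm) (hcp : cp = q * Q / rp)
    (am bm c'm : ℝ) (ham : 0 < am)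
    (haas : (fun s => a s - am * Real.exp (κm * s)) =O[atBot] fun s => Real.exp (3 * κm * s))
    (hbas : (fun s => b s - bm * Real.exp (κm * s)) =O[atBot] fun s => Real.exp (3 * κm * s))
    (hcas : (fun s => c s - (cm + c'm * Real.exp (2 * κm * s)))
      =O[atBot] fun s => Real.exp (4 * κm * s))
    (haint : Integrable a)
    (A : ℝ) (hA : A = ∫ s, a s) (hApos : 0 < A)
    (g : ℝ → ℝ) (hg : ∀ t, g t = ∫ s in Set.Iic t, a s)
    (hfun : ℝ → ℝ) (hgh : ∀ t, hfun (g t) = t)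
    (hhg : ∀ X ∈ Set.Ioo (0 : ℝ) A, g (hfun X) = X) :
    ((fun X => a (hfun X) - κm * X) =O[nhdsWithin 0 (Set.Ioi 0)] fun X => X ^ 3) ∧
    ((fun X => deriv a (hfun X) - κm ^ 2 * X) =O[nhdsWithin 0 (Set.Ioi 0)] fun X => X ^ 3) ∧
    ((fun X => b (hfun X) - bm * κm / am * X) =O[nhdsWithin 0 (Set.Ioi 0)] fun X => X ^ 3) ∧
    ((fun X => deriv b (hfun X) - bm * κm ^ 2 / am * X)
      =O[nhdsWithin 0 (Set.Ioi 0)] fun X => X ^ 3) ∧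
    ((fun X => c (hfun X) - (cm + c'm * (κm / am) ^ 2 * X ^ 2))
      =O[nhdsWithin 0 (Set.Ioi 0)] fun X => X ^ 4) ∧
    ((fun X => deriv c (hfun X) - 2 * c'm * κm * (κm / am) ^ 2 * X ^ 2)
      =O[nhdsWithin 0 (Set.Ioi 0)] fun X => X ^ 4) := by
  obtain rfl : F = metricFunction M Q Λ := funext hF
  have hrm : 0 < rm := hrc.trans hrcm
  have hx' : ∀ y ∈ Set.Ioo rm rp, HasDerivAt x (metricFunction M Q Λ y)⁻¹ y := fun y hy =>
    hasDerivAt_reggeWheeler hΛ.ne' hrn hrc hrcm hrmp hFn hFc hFm hFp hκn hκc hκm hκp hx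
      (hrm.trans hy.1).ne' (hFpos y hy).ne'
  have hx'_pos : ∀ y ∈ Set.Ioo rm rp, 0 < (metricFunction M Q Λ y)⁻¹ := fun y hy =>
    inv_pos.2 (hFpos y hy)
  have hr_flow (s : ℝ) : HasDerivAt rfun (metricFunction M Q Λ (rfun s)) s := by
    simpa only [inv_inv] using hasDerivAt_of_rightInverse hx' hx'_pos hrmem hrinv s
  have hr_lim : Tendsto rfun atBot (nhds rm) := tendsto_atBot_of_rightInverse hrmp
    (strictMonoOn_Ioo_of_hasDerivAt_pos hx' hx'_pos) hrmem hrinv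
  exact stmt_4_general hrm (contDiffAt_metricFunction hrm.ne') hFm hκm hκmpos hr_flow hr_lim
    (fun s => hrm.trans (hrmem s).1) (fun s => hFpos _ (hrmem s)) ha hb hc hcm ham.ne' haas hbas
    hcas haint hg (eventually_of_mem (Ioo_mem_nhdsGT hApos) hhg)
end

section
/- As X → 0⁺ one has e^{iλ·h(X)} = (κ/a₀)^{iλ/κ}·X^{iλ/κ} + O(X²). -/
open Asymptotics Filter MeasureTheory

/-!
Integrating `a(s) = a₀ e^{κs} + O(e^{μs})` gives `g(t) = c e^{κt} + O(e^{μt})` with `c = a₀ / κ`.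
The relative error is `O(e^{(μ-κ)t})`, so `log g(t) = log c + κt + O(e^{(μ-κ)t})`. At `t = h(X)`,
where `e^{κt}` is comparable to `g(t) = X`, this reads `κ h(X) = log (X / c) + O(X^{(μ-κ)/κ})`,
and `y ↦ e^{iy}` is `1`-Lipschitz on the real line. The theorem is the case `μ = 3κ`.
-/

theorem isBigO_integral_Iic_of_isBigO_atBot {α E F : Type*} [Preorder α] [TopologicalSpace α]
    [ClosedIicTopology α] [MeasurableSpace α] [OpensMeasurableSpace α] {ν : Measure α}
    [NormedAddCommGroup E] [NormedSpace ℝ E] [NormedAddCommGroup F] {f : α → E} {φ : α → F}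
    (hfφ : f =O[atBot] φ) (hφ : ∀ᶠ t in atBot, IntegrableOn φ (Set.Iic t) ν) :
    (fun t => ∫ s in Set.Iic t, f s ∂ν) =O[atBot] fun t => ∫ s in Set.Iic t, ‖φ s‖ ∂ν := by
  obtain ⟨C, hC⟩ := hfφ.bound
  refine IsBigO.of_bound C ?_
  filter_upwards [eventually_forall_le_atBot.mpr hC, hφ] with t hCt hφt
  have norm_le : ∀ᵐ s ∂ν.restrict (Set.Iic t), ‖f s‖ ≤ C * ‖φ s‖ :=
    ae_restrict_of_forall_mem measurableSet_Iic hCt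
  calc ‖∫ s in Set.Iic t, f s ∂ν‖
      ≤ ∫ s in Set.Iic t, C * ‖φ s‖ ∂ν := norm_integral_le_of_norm_le (hφt.norm.const_mul C) norm_le
    _ = C * ∫ s in Set.Iic t, ‖φ s‖ ∂ν := integral_const_mul C _
    _ = C * ‖∫ s in Set.Iic t, ‖φ s‖ ∂ν‖ := by
      rw [Real.norm_of_nonneg (integral_nonneg fun s => norm_nonneg (φ s))]

theorem isBigO_integral_Iic_exp_mul {E : Type*} [NormedAddCommGroup E] [NormedSpace ℝ E]
    {f : ℝ → E} {μ : ℝ} (hμ : 0 < μ) (hf : f =O[atBot] fun s => Real.exp (μ * s)) :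
    (fun t => ∫ s in Set.Iic t, f s) =O[atBot] fun t => Real.exp (μ * t) := by
  have integral_isBigO := isBigO_integral_Iic_of_isBigO_atBot hf
    (Eventually.of_forall (integrableOn_exp_mul_Iic hμ))
  simp only [Real.norm_eq_abs, Real.abs_exp, integral_exp_mul_Iic hμ, div_eq_inv_mul]
    at integral_isBigO
  exact (isBigO_const_mul_right_iff (inv_ne_zero hμ.ne')).mp integral_isBigO

theorem isBigO_integral_Iic_sub_const_mul_exp {a : ℝ → ℝ} {a₀ κ μ : ℝ} (hκ : 0 < κ) (hμ : 0 < μ)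
    (haint : ∀ t, IntegrableOn a (Set.Iic t))
    (ha : (fun s => a s - a₀ * Real.exp (κ * s)) =O[atBot] fun s => Real.exp (μ * s)) :
    (fun t => (∫ s in Set.Iic t, a s) - a₀ / κ * Real.exp (κ * t))
      =O[atBot] fun t => Real.exp (μ * t) := by
  refine (isBigO_integral_Iic_exp_mul hμ ha).congr_left fun t => ?_
  rw [integral_sub (haint t) ((integrableOn_exp_mul_Iic hκ t).const_mul a₀), integral_const_mul,
    integral_exp_mul_Iic hκ, mul_div_assoc', div_mul_eq_mul_div]

theorem monotone_integral_Iic_s6 {α : Type*} [Preorder α] [MeasurableSpace α] {ν : Measure α}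
    {f : α → ℝ} (hf : 0 ≤ f) (hfint : ∀ t, IntegrableOn f (Set.Iic t) ν) :
    Monotone fun t => ∫ s in Set.Iic t, f s ∂ν := fun _ t hst =>
  setIntegral_mono_set (hfint t) (ae_of_all _ hf) (Set.Iic_subset_Iic.mpr hst).eventuallyLE

theorem tendsto_atBot_of_monotone_of_tendsto_comp {α β γ : Type*} [LinearOrder α] [LinearOrder β]
    [TopologicalSpace β] [ClosedIciTopology β] {g : α → β} {h : γ → α} {l : Filter γ} {b : β}
    (hg : Monotone g) (hb : ∃ᶠ t in atBot, b < g t) (hgh : Tendsto (g ∘ h) l (nhds b)) :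
    Tendsto h l atBot := by
  refine tendsto_atBot.mpr fun M => ?_
  obtain ⟨t, hbt, htM⟩ := (hb.and_eventually (eventually_le_atBot M)).exists
  filter_upwards [hgh.eventually_lt_const hbt] with x hx
  exact (hg.reflect_lt hx).le.trans htM

theorem isBigO_log_sub_log_of_isEquivalent {α : Type*} {l : Filter α} {u v : α → ℝ}
    (huv : u ~[l] v) (hv : ∀ᶠ x in l, v x ≠ 0) :
    (fun x => Real.log (u x) - Real.log (v x)) =O[l] fun x => (u x - v x) / v x := by
  have ratio_tendsto : Tendsto (u / v) l (nhds 1) := (isEquivalent_iff_tendsto_one hv).mp huv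
  have log_isBigO := (Real.hasDerivAt_log one_ne_zero).isBigO_sub.comp_tendsto ratio_tendsto
  refine log_isBigO.congr' ?_ ?_
  · filter_upwards [hv, ratio_tendsto.eventually_ne one_ne_zero] with x hvx hratio
    have hux : u x ≠ 0 := (div_ne_zero_iff.mp hratio).1
    simp [Real.log_div hux hvx]
  · filter_upwards [hv] with x hvx
    simp [sub_div, hvx]

theorem norm_exp_I_mul_sub_exp_I_mul_le (x y : ℝ) :
    ‖Complex.exp (Complex.I * x) - Complex.exp (Complex.I * y)‖ ≤ ‖x - y‖ := by
  have factor : Complex.exp (Complex.I * x) - Complex.exp (Complex.I * y)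
      = Complex.exp (Complex.I * y) * (Complex.exp (Complex.I * (x - y : ℝ)) - 1) := by
    rw [mul_sub_one, ← Complex.exp_add]
    push_cast
    ring_nf
  rw [factor, norm_mul, Complex.norm_exp_I_mul_ofReal, one_mul]
  exact Real.norm_exp_I_mul_ofReal_sub_one_le

section ExponentialLeadingTerm

variable {g : ℝ → ℝ} {c κ μ : ℝ}

theorem isEquivalent_const_mul_exp_of_isBigO (hc : c ≠ 0) (hκμ : κ < μ)
    (hg : (fun t => g t - c * Real.exp (κ * t)) =O[atBot] fun t => Real.exp (μ * t)) :
    g ~[atBot] fun t => c * Real.exp (κ * t) := by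
  have exp_isLittleO : (fun t => Real.exp (μ * t)) =o[atBot] fun t => Real.exp (κ * t) := by
    refine Real.isLittleO_exp_comp_exp_comp.mpr ?_
    simpa only [← sub_mul, id] using tendsto_id.const_mul_atBot_of_neg (sub_neg.mpr hκμ)
  exact hg.trans_isLittleO (exp_isLittleO.const_mul_right hc)

theorem isBigO_log_sub_of_isBigO_sub_const_mul_exp (hc : c ≠ 0) (hκμ : κ < μ)
    (hg : (fun t => g t - c * Real.exp (κ * t)) =O[atBot] fun t => Real.exp (μ * t)) :
    (fun t => Real.log (g t) - (Real.log c + κ * t))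
      =O[atBot] fun t => Real.exp ((μ - κ) * t) := by
  have leading_ne_zero (t : ℝ) : c * Real.exp (κ * t) ≠ 0 := mul_ne_zero hc (Real.exp_ne_zero _)
  have log_isBigO := isBigO_log_sub_log_of_isEquivalent
    (isEquivalent_const_mul_exp_of_isBigO hc hκμ hg) (Eventually.of_forall leading_ne_zero)
  have relative_error : (fun t => (g t - c * Real.exp (κ * t)) / (c * Real.exp (κ * t)))
      =O[atBot] fun t => Real.exp ((μ - κ) * t) := by
    refine ((hg.mul (isBigO_refl (fun t => (Real.exp (κ * t))⁻¹) _)).const_mul_left c⁻¹).congr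
      (fun t => ?_) (fun t => ?_)
    · rw [div_eq_mul_inv, mul_inv, mul_left_comm]
    · rw [sub_mul, Real.exp_sub, div_eq_mul_inv]
  refine (log_isBigO.trans relative_error).congr_left fun t => ?_
  rw [Real.log_mul hc (Real.exp_ne_zero _), Real.log_exp]

theorem isBigO_mul_rightInverse_sub_log {h : ℝ → ℝ} (hc : c ≠ 0) (hκ : 0 < κ) (hκμ : κ < μ)
    (hg : (fun t => g t - c * Real.exp (κ * t)) =O[atBot] fun t => Real.exp (μ * t))
    (hh : Tendsto h (nhdsWithin 0 (Set.Ioi 0)) atBot)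
    (hgh : ∀ᶠ X in nhdsWithin 0 (Set.Ioi 0), g (h X) = X) :
    (fun X => κ * h X - (Real.log X - Real.log c))
      =O[nhdsWithin 0 (Set.Ioi 0)] fun X => X ^ ((μ - κ) / κ) := by
  have log_isBigO : (fun X => κ * h X - (Real.log X - Real.log c))
      =O[nhdsWithin 0 (Set.Ioi 0)] fun X => Real.exp ((μ - κ) * h X) := by
    refine ((isBigO_log_sub_of_isBigO_sub_const_mul_exp hc hκμ hg).comp_tendsto hh).neg_left.congr'
      ?_ .rfl
    filter_upwards [hgh] with X hX
    simp only [Function.comp_apply, hX]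
    ring
  have exp_isBigO : (fun X => Real.exp (κ * h X)) =O[nhdsWithin 0 (Set.Ioi 0)] fun X => X := by
    have leading_isBigO :=
      (isEquivalent_const_mul_exp_of_isBigO hc hκμ hg).isBigO_symm.comp_tendsto hh
    exact ((isBigO_const_mul_left_iff hc).mp leading_isBigO).congr' .rfl hgh
  have exponent_nonneg : 0 ≤ (μ - κ) / κ := div_nonneg (sub_nonneg.mpr hκμ.le) hκ.le
  have X_nonneg : 0 ≤ᶠ[nhdsWithin 0 (Set.Ioi 0)] fun X : ℝ => X :=
    eventually_mem_nhdsWithin.mono fun _ hX => le_of_lt hX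
  refine log_isBigO.trans ((exp_isBigO.rpow exponent_nonneg X_nonneg).congr_left fun X => ?_)
  rw [← Real.exp_mul]
  congr 1
  field_simp

end ExponentialLeadingTerm

theorem tendsto_rightInverse_integral_Iic_atBot {a h : ℝ → ℝ} {a₀ κ μ : ℝ} (hκ : 0 < κ)
    (ha₀ : 0 < a₀) (hκμ : κ < μ) (ha : 0 ≤ a) (haint : ∀ t, IntegrableOn a (Set.Iic t))
    (haas : (fun s => a s - a₀ * Real.exp (κ * s)) =O[atBot] fun s => Real.exp (μ * s))
    (hh : ∀ᶠ X in nhdsWithin 0 (Set.Ioi 0), ∫ s in Set.Iic (h X), a s = X) :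
    Tendsto h (nhdsWithin 0 (Set.Ioi 0)) atBot := by
  have integral_equiv := isEquivalent_const_mul_exp_of_isBigO (div_pos ha₀ hκ).ne' hκμ
    (isBigO_integral_Iic_sub_const_mul_exp hκ (hκ.trans hκμ) haint haas)
  have integral_pos : ∀ᶠ t in atBot, 0 < ∫ s in Set.Iic t, a s :=
    integral_equiv.eventually_pos (Eventually.of_forall fun t => by positivity)
  exact tendsto_atBot_of_monotone_of_tendsto_comp (monotone_integral_Iic_s6 ha haint)
    integral_pos.frequently
    ((tendsto_nhdsWithin_of_tendsto_nhds tendsto_id).congr' (EventuallyEq.symm hh))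

theorem stmt_6_general {κ a₀ μ : ℝ} (hκ : 0 < κ) (ha₀ : 0 < a₀) (hκμ : κ < μ)
    {a : ℝ → ℝ} (ha : 0 ≤ a) (haint : ∀ t, IntegrableOn a (Set.Iic t))
    (haas : (fun s => a s - a₀ * Real.exp (κ * s)) =O[atBot] fun s => Real.exp (μ * s))
    (lam : ℝ) {h : ℝ → ℝ}
    (hh : ∀ᶠ X in nhdsWithin 0 (Set.Ioi 0), ∫ s in Set.Iic (h X), a s = X) :
    (fun X : ℝ => Complex.exp (Complex.I * (lam : ℂ) * ((h X : ℝ) : ℂ))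
        - Complex.exp ((Complex.I * (lam : ℂ) / (κ : ℂ)) * ((Real.log (κ / a₀) : ℝ) : ℂ))
          * Complex.exp ((Complex.I * (lam : ℂ) / (κ : ℂ)) * ((Real.log X : ℝ) : ℂ)))
      =O[nhdsWithin 0 (Set.Ioi 0)] fun X => X ^ ((μ - κ) / κ) := by
  have inverse_isBigO := isBigO_mul_rightInverse_sub_log (div_pos ha₀ hκ).ne' hκ hκμ
    (isBigO_integral_Iic_sub_const_mul_exp hκ (hκ.trans hκμ) haint haas)
    (tendsto_rightInverse_integral_Iic_atBot hκ ha₀ hκμ ha haint haas hh) hh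
  refine IsBigO.trans (IsBigO.of_bound |lam / κ| (Eventually.of_forall fun X => ?_)) inverse_isBigO
  have hκ' : (κ : ℂ) ≠ 0 := Complex.ofReal_ne_zero.mpr hκ.ne'
  have log_inv : Real.log (κ / a₀) = -Real.log (a₀ / κ) := by rw [← Real.log_inv, inv_div]
  have phase_bound := norm_exp_I_mul_sub_exp_I_mul_le (lam / κ * (κ * h X))
    (lam / κ * (Real.log X - Real.log (a₀ / κ)))
  rw [← mul_sub, norm_mul, Real.norm_eq_abs (lam / κ)] at phase_bound
  convert phase_bound using 3
  · push_cast
    field_simp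
  · rw [← Complex.exp_add, log_inv]
    push_cast
    ring_nf

/-- In the Liouville variable `X = g(x) = ∫_{−∞}^x a(s) ds`, with inverse `h`,
one has `e^{iλh(X)} = (κ/a₀)^{iλ/κ}·X^{iλ/κ} + O(X²)` as `X → 0⁺`, where `X^w = e^{w log X}`. -/
theorem stmt_6 (κ a₀ : ℝ) (hκ : 0 < κ) (ha₀ : 0 < a₀)
    (a : ℝ → ℝ) (hacont : Continuous a) (hapos : ∀ s, 0 < a s)
    (haint : ∀ x₀ : ℝ, IntegrableOn a (Set.Iic x₀))
    (haas : (fun s => a s - a₀ * Real.exp (κ * s)) =O[atBot] fun s => Real.exp (3 * κ * s))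
    (lam : ℝ)
    (g : ℝ → ℝ) (hg : ∀ t, g t = ∫ s in Set.Iic t, a s)
    (h : ℝ → ℝ) (hgh : ∀ t, h (g t) = t)
    (hhg : ∀ᶠ X in nhdsWithin 0 (Set.Ioi 0), g (h X) = X) :
    (fun X : ℝ => Complex.exp (Complex.I * (lam : ℂ) * ((h X : ℝ) : ℂ))
        - Complex.exp ((Complex.I * (lam : ℂ) / (κ : ℂ)) * ((Real.log (κ / a₀) : ℝ) : ℂ))
          * Complex.exp ((Complex.I * (lam : ℂ) / (κ : ℂ)) * ((Real.log X : ℝ) : ℂ)))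
      =O[nhdsWithin 0 (Set.Ioi 0)] fun X => X ^ 2 := by
  have exponent_eq : (3 * κ - κ) / κ = 2 := by field_simp; norm_num
  simpa only [exponent_eq, Real.rpow_two] using stmt_6_general hκ ha₀ (by linarith)
    (fun s => (hapos s).le) haint haas lam (hhg.mono fun X hX => (hg (h X)).symm.trans hX)
end

section
/- Let h be a holomorphic function on Π⁺ and suppose there exist constants A ≥ 0 and C ≥ 0 such that |h(z)| ≤ C·e^{A·Re(z)} for all z ∈ Π⁺. Then h belongs to the Nevanlinna class N(Π⁺). -/
/-- The right half plane `Π⁺ = {z ∈ ℂ : Re z > 0}`. -/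
def PiPlus : Set ℂ := {z : ℂ | 0 < z.re}

/-- `ln⁺(x) = ln x` if `ln x ≥ 0` and `0` otherwise. -/
noncomputable def lnPlus (x : ℝ) : ℝ := max (Real.log x) 0

/-- The Nevanlinna class `N(Π⁺)`: holomorphic functions `f` on `Π⁺` such that
`sup_{0<r<1} ∫_{−π}^{π} ln⁺ |f((1 − re^{iφ})/(1 + re^{iφ}))| dφ < ∞`. -/
def MemNevanlinna (f : ℂ → ℂ) : Prop :=
  DifferentiableOn ℂ f PiPlus ∧
  ∃ B : ℝ, ∀ r ∈ Set.Ioo (0 : ℝ) 1,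
    (∫ φ in (-Real.pi)..Real.pi,
        lnPlus (norm (f ((1 - (r : ℂ) * Complex.exp (Complex.I * (φ : ℂ))) /
          (1 + (r : ℂ) * Complex.exp (Complex.I * (φ : ℂ))))))) ≤ B

/-!
The Cayley transform `z ↦ (1 - z) / (1 + z)` maps the unit disc into `Π⁺` and `0` to `1`. If
`ln⁺ |f|` has a harmonic majorant `u` on `Π⁺`, then `u` pulled back to the disc is harmonic, and the
mean value property bounds all the integrals in the definition of `N(Π⁺)` by `2π u(1)`. Under the
exponential bound on `h`, such a majorant is `u(z) = ln⁺ C + A Re z`.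
-/

open Real Set Metric InnerProductSpace

theorem harmonicAt_comp_of_analyticAt {u : ℂ → ℝ} {g : ℂ → ℂ} {z : ℂ}
    (hu : HarmonicAt u (g z)) (hg : AnalyticAt ℂ g z) : HarmonicAt (u ∘ g) z := by
  obtain ⟨ε, hε, hball⟩ := eventually_nhds_iff_ball.mp hu.eventually
  obtain ⟨F, hF, hFu⟩ := HarmonicOnNhd.exists_analyticOnNhd_ball_re_eq hball
  have hre : HarmonicAt (fun w ↦ (F (g w)).re) z :=
    ((hF (g z) (mem_ball_self hε)).comp hg).harmonicAt_re
  refine (harmonicAt_congr_nhds ?_).mp hre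
  filter_upwards [hg.continuousAt.preimage_mem_nhds (ball_mem_nhds (g z) hε)] with w hw
  exact hFu hw

theorem integral_neg_pi_pi_circleMap_eq_smul_circleAverage {E : Type*} [NormedAddCommGroup E]
    [NormedSpace ℝ E] (f : ℂ → E) (c : ℂ) (R : ℝ) :
    ∫ φ in (-π)..π, f (circleMap c R φ) = (2 * π) • circleAverage f c R := by
  rw [circleAverage_eq_integral_add (-π), smul_inv_smul₀ two_pi_pos.ne',
    intervalIntegral.integral_comp_add_right fun φ ↦ f (circleMap c R φ)]
  ring_nf

theorem posLog_le_posLog_add_of_le_mul_exp {x C t : ℝ} (hx : 0 ≤ x) (ht : 0 ≤ t)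
    (hxC : x ≤ C * exp t) : log⁺ x ≤ log⁺ C + t :=
  calc
    log⁺ x ≤ log⁺ (C * exp t) := posLog_le_posLog hx hxC
    _ ≤ log⁺ C + log⁺ (exp t) := posLog_mul
    _ = log⁺ C + t := by rw [posLog_apply (x := exp t), log_exp, max_eq_right ht]

theorem lnPlus_eq_posLog (x : ℝ) : lnPlus x = log⁺ x :=
  max_comm _ _

/-- The Cayley transform, as a conformal map of the open unit disc onto `PiPlus`. At the boundary
point `z = -1`, which it sends to infinity, it takes the junk value `0`. -/
noncomputable def cayley (z : ℂ) : ℂ := (1 - z) / (1 + z)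

theorem cayley_zero : cayley 0 = 1 := by
  simp [cayley]

theorem cayley_re (z : ℂ) :
    (cayley z).re = (1 - Complex.normSq z) / Complex.normSq (1 + z) := by
  simp only [cayley, Complex.div_re, Complex.normSq_apply z, Complex.sub_re, Complex.sub_im,
    Complex.add_re, Complex.add_im, Complex.one_re, Complex.one_im]
  ring

theorem one_add_ne_zero_of_mem_ball {z : ℂ} (hz : z ∈ ball 0 1) : 1 + z ≠ 0 := by
  intro h
  simp [eq_neg_of_add_eq_zero_right h] at hz

theorem mapsTo_cayley_ball_PiPlus : MapsTo cayley (ball 0 1) PiPlus := by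
  intro z hz
  have hnum : Complex.normSq z < 1 := by
    rw [Complex.normSq_eq_norm_sq]
    exact pow_lt_one₀ (norm_nonneg z) (mem_ball_zero_iff.mp hz) two_ne_zero
  change 0 < (cayley z).re
  rw [cayley_re]
  exact div_pos (sub_pos.mpr hnum) (Complex.normSq_pos.mpr (one_add_ne_zero_of_mem_ball hz))

theorem analyticOnNhd_cayley_ball : AnalyticOnNhd ℂ cayley (ball 0 1) :=
  fun _ hz ↦ (analyticAt_const.sub analyticAt_id).div (analyticAt_const.add analyticAt_id)
    (one_add_ne_zero_of_mem_ball hz)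

theorem harmonicOnNhd_comp_cayley {u : ℂ → ℝ} (hu : HarmonicOnNhd u PiPlus) :
    HarmonicOnNhd (u ∘ cayley) (ball 0 1) :=
  fun z hz ↦ harmonicAt_comp_of_analyticAt (hu _ (mapsTo_cayley_ball_PiPlus hz))
    (analyticOnNhd_cayley_ball z hz)

theorem integral_lnPlus_norm_eq_circleAverage (f : ℂ → ℂ) (r : ℝ) :
    ∫ φ in (-π)..π, lnPlus ‖f ((1 - (r : ℂ) * Complex.exp (Complex.I * (φ : ℂ))) /
        (1 + (r : ℂ) * Complex.exp (Complex.I * (φ : ℂ))))‖ =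
      2 * π * circleAverage (fun z ↦ log⁺ ‖f (cayley z)‖) 0 r := by
  rw [← smul_eq_mul, ← integral_neg_pi_pi_circleMap_eq_smul_circleAverage]
  simp only [lnPlus_eq_posLog, cayley, circleMap_zero, mul_comm Complex.I]

theorem memNevanlinna_of_posLog_norm_le_harmonic {f : ℂ → ℂ} {u : ℂ → ℝ}
    (hf : DifferentiableOn ℂ f PiPlus) (hu : HarmonicOnNhd u PiPlus)
    (hfu : ∀ z ∈ PiPlus, log⁺ ‖f z‖ ≤ u z) : MemNevanlinna f := by
  refine ⟨hf, 2 * π * u 1, fun r hr ↦ ?_⟩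
  have hclosedBall : closedBall (0 : ℂ) |r| ⊆ ball 0 1 :=
    closedBall_subset_ball (abs_lt.mpr ⟨by linarith [hr.1], hr.2⟩)
  have hsphere : sphere (0 : ℂ) |r| ⊆ ball 0 1 := sphere_subset_closedBall.trans hclosedBall
  have hharm : HarmonicOnNhd (u ∘ cayley) (closedBall 0 |r|) :=
    (harmonicOnNhd_comp_cayley hu).mono hclosedBall
  have hf_int : CircleIntegrable (fun z ↦ log⁺ ‖f (cayley z)‖) 0 r := by
    have hcont : ContinuousOn (f ∘ cayley) (ball 0 1) :=
      hf.continuousOn.comp analyticOnNhd_cayley_ball.continuousOn mapsTo_cayley_ball_PiPlus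
    exact (continuous_posLog.comp_continuousOn (hcont.mono hsphere).norm).circleIntegrable'
  have hu_int : CircleIntegrable (u ∘ cayley) 0 r :=
    (hharm.continuousOn.mono sphere_subset_closedBall).circleIntegrable'
  rw [integral_lnPlus_norm_eq_circleAverage]
  gcongr
  calc
    circleAverage (fun z ↦ log⁺ ‖f (cayley z)‖) 0 r ≤ circleAverage (u ∘ cayley) 0 r :=
      circleAverage_mono hf_int hu_int fun z hz ↦ hfu _ (mapsTo_cayley_ball_PiPlus (hsphere hz))
    _ = u 1 := by rw [hharm.circleAverage_eq, Function.comp_apply, cayley_zero]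

theorem harmonicAt_const_add_mul_re (a b : ℝ) (z : ℂ) :
    HarmonicAt (fun w : ℂ ↦ a + b * w.re) z :=
  (harmonicAt_const a).add (analyticAt_id.harmonicAt_re.const_smul (c := b))

/-- A holomorphic function on `Π⁺` satisfying
`|h(z)| ≤ C·e^{A·Re z}` belongs to the Nevanlinna class `N(Π⁺)`. -/
theorem stmt_10 (h : ℂ → ℂ) (hhol : DifferentiableOn ℂ h PiPlus)
    (A C : ℝ) (hA : 0 ≤ A) (hC : 0 ≤ C)
    (hbd : ∀ z ∈ PiPlus, norm (h z) ≤ C * Real.exp (A * z.re)) :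
    MemNevanlinna h := by
  refine memNevanlinna_of_posLog_norm_le_harmonic hhol
    (fun z _ ↦ harmonicAt_const_add_mul_re (log⁺ C) A z) fun z hz ↦ ?_
  have hre : 0 < z.re := hz
  exact posLog_le_posLog_add_of_le_mul_exp (norm_nonneg _) (by positivity) (hbd z hz)
end
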